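/- arXiv:2508.21671 — 3 statements merged into one kernel-verified Lean document; each statement's English description precedes it below -/
import Mathlib

section
/- Let p be a prime with p > 5 and let (x, y, z) ∈ 𝔽_p³ satisfy x² + y² + z² − xyz ≠ 4. Then the number of pairs (A, B) ∈ SL(2, 𝔽_p) × SL(2, 𝔽_p) with tr(A) = x, tr(B) = y, and tr(AB) = z equals p(p² − 1). -/
namespace Tower
variable {F : Type*} [Field F] [Fintype F] [DecidableEq F]

lemma card_sq (hF : ringChar F ≠ 2) (a : F) :
    (Nat.card {u : F // u ^ 2 = a} : ℤ) = 1 + quadraticChar F a := by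
  have h := quadraticChar_card_sqrts hF a
  rw [add_comm, ← h, Nat.card_eq_fintype_card]
  norm_cast
  rw [Set.toFinset_card]
  rfl

lemma card_fib {α β : Type*} [Fintype α] [Finite β] (P : α → β → Prop) :
    (Nat.card {x : α × β // P x.1 x.2} : ℤ) = ∑ a, (Nat.card {b // P a b} : ℤ) := by
  rw [Nat.card_congr (Equiv.subtypeProdEquivSigmaSubtype P), Nat.card_sigma]
  push_cast
  rfl

lemma sum_sq (hF : ringChar F ≠ 2) (f : F → ℤ) :
    ∑ v : F, f (v ^ 2) = ∑ b : F, f b * (1 + quadraticChar F b) := by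
  rw [← Finset.sum_fiberwise (s := Finset.univ) (g := fun v : F => v ^ 2)]
  refine Finset.sum_congr rfl fun b _ => ?_
  rw [← card_sq hF, Nat.card_eq_fintype_card, Fintype.card_subtype, mul_comm, ← nsmul_eq_mul]
  apply Finset.sum_eq_card_nsmul
  intro v hv
  rw [(Finset.mem_filter.mp hv).2]

lemma sum_char (hF : ringChar F ≠ 2) (D k : F) (hD : D ≠ 0) (hk : k ≠ 0) :
    ∑ b : F, quadraticChar F (k + D * b) * quadraticChar F b = - quadraticChar F D := by
  have hJ : jacobiSum (quadraticChar F) (quadraticChar F) = - quadraticChar F (-1) := by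
    have := jacobiSum_nontrivial_inv (quadraticChar_ne_one hF)
    rwa [(quadraticChar_isQuadratic F).inv] at this
  have hc : -k / D ≠ 0 := by simp [hk, hD]
  rw [← Equiv.sum_comp (Equiv.mulLeft₀ (-k / D) hc)]
  have : ∀ t : F, quadraticChar F (k + D * (Equiv.mulLeft₀ (-k / D) hc t)) *
      quadraticChar F (Equiv.mulLeft₀ (-k / D) hc t) =
      quadraticChar F (-D) * (quadraticChar F t * quadraticChar F (1 - t)) := by
    intro t
    simp only [Equiv.mulLeft₀_apply]
    rw [← map_mul, ← map_mul, ← map_mul]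
    have e : (k + D * (-k / D * t)) * (-k / D * t) = (k / D) ^ 2 * (-D * (t * (1 - t))) := by
      field_simp
      ring
    rw [e, map_mul, quadraticChar_sq_one' (by simp [hk, hD]), one_mul]
  simp_rw [this]
  rw [← Finset.mul_sum]
  change _ * jacobiSum _ _ = _
  rw [hJ, mul_neg, ← map_mul]
  simp

lemma sum_affine (hF : ringChar F ≠ 2) (D k : F) (hD : D ≠ 0) :
    ∑ b : F, quadraticChar F (k + D * b) = 0 := by
  rw [← quadraticChar_sum_zero hF]
  exact ((Equiv.mulLeft₀ D hD).trans (Equiv.addLeft k)).sum_comp (fun b => quadraticChar F b)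

lemma conic (hF : ringChar F ≠ 2) (D k : F) (hD : D ≠ 0) (hk : k ≠ 0) :
    (Nat.card {u : F × F // u.2 ^ 2 = k + D * u.1 ^ 2} : ℤ)
      = Fintype.card F - quadraticChar F D := by
  rw [card_fib (fun v u : F => u ^ 2 = k + D * v ^ 2)]
  simp_rw [card_sq hF]
  rw [sum_sq hF (fun b => 1 + quadraticChar F (k + D * b))]
  have : ∀ b : F, (1 + quadraticChar F (k + D * b)) * (1 + quadraticChar F b) =
    1 + quadraticChar F (k + D * b) + quadraticChar F b
      + quadraticChar F (k + D * b) * quadraticChar F b := by intro b; ring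
  simp_rw [this, Finset.sum_add_distrib]
  rw [sum_char hF D k hD hk, sum_affine hF D k hD, quadraticChar_sum_zero hF]
  simp
  ring

lemma conic2 (hF : ringChar F ≠ 2) (D m n : F) (h : D * n - m ^ 2 ≠ 0) :
    (Nat.card {u : F × F // u.2 ^ 2 - D * u.1 ^ 2 + 2 * m * u.1 = n} : ℤ)
      = Fintype.card F - quadraticChar F D := by
  have h2 : (2 : F) ≠ 0 := Ring.two_ne_zero hF
  by_cases hD : D = 0
  · subst hD
    have hm : m ≠ 0 := by rintro rfl; simp at h
    rw [Nat.card_congr (β := F)]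
    · simp
    · exact
      { toFun := fun u => u.1.2
        invFun := fun t => ⟨((n - t ^ 2) / (2 * m), t), by field_simp; ring⟩
        left_inv := by
          rintro ⟨⟨g, t⟩, hh⟩
          simp only [Subtype.mk.injEq, Prod.mk.injEq, and_true] at *
          field_simp
          linear_combination -hh
        right_inv := fun t => rfl }
  · rw [← conic hF D (n - m ^ 2 / D) hD (by field_simp; exact div_ne_zero (by rwa [mul_comm n D]) hD)]
    congr 1
    refine Nat.card_congr (Equiv.subtypeEquiv
      (Equiv.prodCongr (Equiv.subRight (m / D)) (Equiv.refl F)) ?_)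
    rintro ⟨g, t⟩
    simp only [Equiv.prodCongr_apply, Prod.map, Equiv.subRight_apply, Equiv.refl_apply]
    have e : n - m ^ 2 / D + D * (g - m / D) ^ 2 = n + D * g ^ 2 - 2 * m * g := by
      field_simp; ring
    rw [e]
    constructor <;> intro h <;> linear_combination h

lemma fiber_c (hF : ringChar F ≠ 2) (D Q w s b c : F) (hc : c ≠ 0) (hD : s ^ 2 + 4 * b * c = D)
    (h : D * Q - w ^ 2 ≠ 0) :
    (Nat.card {u : F × F × F // u.1 ^ 2 + 4 * u.2.1 * u.2.2 = Q ∧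
      s * u.1 + 2 * b * u.2.2 + 2 * c * u.2.1 = w} : ℤ) = Fintype.card F - quadraticChar F D := by
  have h2 : (2 : F) ≠ 0 := Ring.two_ne_zero hF
  rw [← conic2 hF D (w * c) (Q * c ^ 2) (by
    have : D * (Q * c ^ 2) - (w * c) ^ 2 = c ^ 2 * (D * Q - w ^ 2) := by ring
    rw [this]; exact mul_ne_zero (pow_ne_zero _ hc) h)]
  congr 1
  refine Nat.card_congr
    { toFun := fun u => ⟨(u.1.2.2, c * u.1.1 - s * u.1.2.2), ?_⟩
      invFun := fun v => ⟨((v.1.2 + s * v.1.1) / c,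
        (w - s * ((v.1.2 + s * v.1.1) / c) - 2 * b * v.1.1) / (2 * c), v.1.1), ?_, ?_⟩
      left_inv := ?_
      right_inv := ?_ }
  · obtain ⟨⟨t, f, g⟩, h1, h3⟩ := u
    simp only at *
    subst hD
    linear_combination c ^ 2 * h1 - 2 * c * g * h3
  · obtain ⟨⟨g, T⟩, h1⟩ := v
    simp only at *
    subst hD
    field_simp
    linear_combination 2 * h1
  · field_simp
    ring
  · rintro ⟨⟨t, f, g⟩, h1, h3⟩
    simp only [Subtype.mk.injEq, Prod.mk.injEq, and_true] at *
    have e : (c * t - s * g + s * g) / c = t := by field_simp; ring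
    rw [e]
    refine ⟨rfl, ?_⟩
    field_simp
    linear_combination -h3
  · rintro ⟨⟨g, T⟩, h1⟩
    simp only [Subtype.mk.injEq, Prod.mk.injEq, true_and] at *
    field_simp
    ring

lemma fiber (hF : ringChar F ≠ 2) (D Q w s b c : F) (hD : s ^ 2 + 4 * b * c = D)
    (h : D * Q - w ^ 2 ≠ 0) :
    (Nat.card {u : F × F × F // u.1 ^ 2 + 4 * u.2.1 * u.2.2 = Q ∧
      s * u.1 + 2 * b * u.2.2 + 2 * c * u.2.1 = w} : ℤ) = Fintype.card F - quadraticChar F D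
        - if (s, b, c) = (0, 0, 0) then (Fintype.card F : ℤ) else 0 := by
  have h2 : (2 : F) ≠ 0 := Ring.two_ne_zero hF
  by_cases hc : c = 0
  swap
  · rw [fiber_c hF D Q w s b c hc hD h]; simp [hc]
  by_cases hb : b = 0
  swap
  · rw [← fiber_c hF D Q w s c b hb (by rw [← hD]; ring) h]
    simp only [Prod.mk.injEq, hb, false_and, and_false, if_false, sub_zero]
    congr 1
    refine Nat.card_congr (Equiv.subtypeEquiv
      (Equiv.prodCongr (Equiv.refl F) (Equiv.prodComm F F)) ?_)
    rintro ⟨t, f, g⟩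
    simp only [Equiv.prodCongr_apply, Prod.map, Equiv.prodComm_apply, Prod.swap, Equiv.refl_apply]
    constructor <;> rintro ⟨h1, h3⟩ <;> constructor <;> first | linear_combination h1 | linear_combination h3
  subst hb hc
  by_cases hs : s = 0
  · subst hs
    have hD0 : D = 0 := by rw [← hD]; ring
    subst hD0
    have hw : w ≠ 0 := by rintro rfl; simp at h
    simp [hw.symm]
  simp only [Prod.mk.injEq, hs, false_and, if_false, sub_zero]
  have hD' : D = s ^ 2 := by rw [← hD]; ring
  rw [← conic2 hF D 0 (Q - w ^ 2 / s ^ 2) (by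
    convert h using 1
    rw [hD']; field_simp; ring)]
  congr 1
  clear hD h
  subst hD'
  refine Nat.card_congr
    { toFun := fun u => ⟨((u.1.2.1 - u.1.2.2) / s, u.1.2.1 + u.1.2.2), ?_⟩
      invFun := fun v => ⟨(w / s, (v.1.2 + s * v.1.1) / 2, (v.1.2 - s * v.1.1) / 2), ?_, ?_⟩
      left_inv := ?_
      right_inv := ?_ }
  · obtain ⟨⟨t, f, g⟩, h1, h3⟩ := u
    simp only at *
    have h3' : w = s * t := by rw [← h3]; ring
    subst h3'
    field_simp
    linear_combination s * h1
  · obtain ⟨⟨g, T⟩, h1⟩ := v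
    simp only at *
    have e : w ^ 2 / s ^ 2 = (w / s) ^ 2 := by field_simp
    rw [e] at h1
    field_simp at h1 ⊢
    linear_combination 4 * h1
  · field_simp
    ring
  · rintro ⟨⟨t, f, g⟩, h1, h3⟩
    simp only [Subtype.mk.injEq, Prod.mk.injEq] at *
    refine ⟨?_, ?_, ?_⟩
    · field_simp; linear_combination -h3
    · field_simp; ring
    · field_simp; ring
  · rintro ⟨⟨g, T⟩, h1⟩
    simp only [Subtype.mk.injEq, Prod.mk.injEq] at *
    constructor
    · field_simp; ring
    · field_simp; ring

lemma quadric (hF : ringChar F ≠ 2) (D : F) :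
    (Nat.card {u : F × F × F // u.1 ^ 2 + 4 * u.2.1 * u.2.2 = D} : ℤ)
      = Fintype.card F ^ 2 + Fintype.card F * quadraticChar F D := by
  have h2 : (2 : F) ≠ 0 := Ring.two_ne_zero hF
  have h4 : (4 : F) ≠ 0 := by
    have : (4 : F) = 2 * 2 := by norm_num
    rw [this]; exact mul_ne_zero h2 h2
  rw [Nat.card_congr (β := {u : (F × F) × F // u.2 ^ 2 = D + (-4 * u.1.1) * u.1.2})
    (Equiv.subtypeEquiv (Equiv.prodComm _ _) (by
      rintro ⟨s, b, c⟩
      simp only [Equiv.prodComm_apply, Prod.swap]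
      constructor <;> intro h <;> linear_combination h)),
    card_fib (fun (v : F × F) (u : F) => u ^ 2 = D + (-4 * v.1) * v.2)]
  simp_rw [card_sq hF]
  rw [Fintype.sum_prod_type]
  simp_rw [Finset.sum_add_distrib]
  rw [Finset.sum_eq_single (0 : F) (f := fun x => ∑ y : F, quadraticChar F (D + (-4 * x) * y))]
  · simp; ring
  · intro b _ hb
    exact sum_affine hF _ _ (by simp [hb, h4])
  · simp

lemma total (hF : ringChar F ≠ 2) (D Q w : F) (h : D * Q - w ^ 2 ≠ 0) :
    (Nat.card {P : (F × F × F) × (F × F × F) // P.1.1 ^ 2 + 4 * P.1.2.1 * P.1.2.2 = D ∧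
      P.2.1 ^ 2 + 4 * P.2.2.1 * P.2.2.2 = Q ∧
      P.1.1 * P.2.1 + 2 * P.1.2.1 * P.2.2.2 + 2 * P.1.2.2 * P.2.2.1 = w} : ℤ)
      = Fintype.card F * (Fintype.card F ^ 2 - 1) := by
  rw [card_fib (fun (v u : F × F × F) => v.1 ^ 2 + 4 * v.2.1 * v.2.2 = D ∧
      u.1 ^ 2 + 4 * u.2.1 * u.2.2 = Q ∧
      v.1 * u.1 + 2 * v.2.1 * u.2.2 + 2 * v.2.2 * u.2.1 = w)]
  have key : ∀ v : F × F × F, (Nat.card {u : F × F × F // v.1 ^ 2 + 4 * v.2.1 * v.2.2 = D ∧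
      u.1 ^ 2 + 4 * u.2.1 * u.2.2 = Q ∧
      v.1 * u.1 + 2 * v.2.1 * u.2.2 + 2 * v.2.2 * u.2.1 = w} : ℤ) =
      (if v.1 ^ 2 + 4 * v.2.1 * v.2.2 = D then (Fintype.card F - quadraticChar F D : ℤ) else 0)
       - (if v = (0, 0, 0) then (if D = 0 then (Fintype.card F : ℤ) else 0) else 0) := by
    rintro ⟨s, b, c⟩
    by_cases hv : s ^ 2 + 4 * b * c = D
    · simp only [hv, true_and, if_true]
      rw [fiber hF D Q w s b c hv h]
      congr 1
      by_cases h0 : (s, b, c) = (0, 0, 0)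
      · have : D = 0 := by
          simp only [Prod.mk.injEq] at h0
          rw [← hv, h0.1, h0.2.1]; ring
        simp [h0, this]
      · simp [h0]
    · simp only [hv, false_and, if_false]
      by_cases h0 : (s, b, c) = (0, 0, 0)
      · have : D ≠ 0 := by
          rintro rfl
          simp only [Prod.mk.injEq] at h0
          apply hv; rw [h0.1, h0.2.1]; ring
        simp [this]
      · simp [h0]
  simp_rw [key]
  rw [Finset.sum_sub_distrib, Finset.sum_ite_eq', ← Finset.sum_filter, Finset.sum_const,
    ← Fintype.card_subtype, ← Nat.card_eq_fintype_card, nsmul_eq_mul, quadric hF]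
  simp only [Finset.mem_univ, if_true]
  by_cases hD : D = 0
  · simp [hD]; ring
  · have := quadraticChar_sq_one hD
    simp only [hD, if_false]
    linear_combination (-(Fintype.card F : ℤ)) * this

end Tower

open Matrix in
theorem Tower.toQuad {F : Type*} [Field F] (h2 : (2 : F) ≠ 0) (x y z : F) :
    Nat.card {AB : Matrix.SpecialLinearGroup (Fin 2) F × Matrix.SpecialLinearGroup (Fin 2) F //
      Matrix.trace (AB.1 : Matrix (Fin 2) (Fin 2) F) = x ∧
      Matrix.trace (AB.2 : Matrix (Fin 2) (Fin 2) F) = y ∧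
      Matrix.trace ((AB.1 * AB.2 : Matrix.SpecialLinearGroup (Fin 2) F) :
        Matrix (Fin 2) (Fin 2) F) = z} =
    Nat.card {P : (F × F × F) × (F × F × F) // P.1.1 ^ 2 + 4 * P.1.2.1 * P.1.2.2 = x ^ 2 - 4 ∧
      P.2.1 ^ 2 + 4 * P.2.2.1 * P.2.2.2 = y ^ 2 - 4 ∧
      P.1.1 * P.2.1 + 2 * P.1.2.1 * P.2.2.2 + 2 * P.1.2.2 * P.2.2.1 = 2 * z - x * y} := by
  refine Nat.card_congr
    { toFun := fun M => ⟨((M.1.1.1 0 0 - M.1.1.1 1 1, M.1.1.1 0 1, M.1.1.1 1 0),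
        (M.1.2.1 0 0 - M.1.2.1 1 1, M.1.2.1 0 1, M.1.2.1 1 0)), ?_⟩
      invFun := fun P => ⟨(⟨!![(x + P.1.1.1) / 2, P.1.1.2.1; P.1.1.2.2, (x - P.1.1.1) / 2], ?_⟩,
        ⟨!![(y + P.1.2.1) / 2, P.1.2.2.1; P.1.2.2.2, (y - P.1.2.1) / 2], ?_⟩), ?_⟩
      left_inv := ?_
      right_inv := ?_ }
  · obtain ⟨⟨⟨A, hA⟩, ⟨B, hB⟩⟩, h1, h3, h4⟩ := M
    have hA' := hA
    have hB' := hB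
    change A.trace = x at h1
    change B.trace = y at h3
    change (A * B).trace = z at h4
    simp only [trace_fin_two, det_fin_two, mul_apply, Fin.sum_univ_two] at h1 h3 h4 hA' hB' ⊢
    subst h1 h3 h4
    refine ⟨?_, ?_, ?_⟩
    · linear_combination -4 * hA'
    · linear_combination -4 * hB'
    · ring
  · obtain ⟨⟨⟨s, b, c⟩, ⟨t, f, g⟩⟩, h1, h3, h4⟩ := P
    simp only [det_fin_two_of] at *
    field_simp
    linear_combination -h1
  · obtain ⟨⟨⟨s, b, c⟩, ⟨t, f, g⟩⟩, h1, h3, h4⟩ := P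
    simp only [det_fin_two_of] at *
    field_simp
    linear_combination -h3
  · obtain ⟨⟨⟨s, b, c⟩, ⟨t, f, g⟩⟩, h1, h3, h4⟩ := P
    change trace !![(x + s) / 2, b; c, (x - s) / 2] = x ∧
      trace !![(y + t) / 2, f; g, (y - t) / 2] = y ∧
      trace (!![(x + s) / 2, b; c, (x - s) / 2] * !![(y + t) / 2, f; g, (y - t) / 2]) = z
    simp only [trace_fin_two, mul_apply, of_apply, cons_val', cons_val_zero,
      cons_val_one, cons_val_fin_one, Fin.sum_univ_two] at *
    refine ⟨?_, ?_, ?_⟩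
    · field_simp; ring
    · field_simp; ring
    · field_simp; linear_combination 2 * h4
  · rintro ⟨⟨⟨A, hA⟩, ⟨B, hB⟩⟩, h1, h3, h4⟩
    change A.trace = x at h1
    change B.trace = y at h3
    rw [trace_fin_two] at h1 h3
    subst h1 h3
    apply Subtype.ext
    apply Prod.ext
    · ext i j
      fin_cases i <;> fin_cases j <;> simp <;> field_simp <;> ring
    · ext i j
      fin_cases i <;> fin_cases j <;> simp <;> field_simp <;> ring
  · rintro ⟨⟨⟨s, b, c⟩, ⟨t, f, g⟩⟩, h1, h3, h4⟩
    simp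
    constructor <;> field_simp <;> ring

theorem tower_card (p : ℕ) (hp : p.Prime) (hp5 : 5 < p) (x y z : ZMod p)
    (hns : x ^ 2 + y ^ 2 + z ^ 2 - x * y * z ≠ 4) :
    Nat.card {AB : Matrix.SpecialLinearGroup (Fin 2) (ZMod p) ×
        Matrix.SpecialLinearGroup (Fin 2) (ZMod p) //
      Matrix.trace (AB.1 : Matrix (Fin 2) (Fin 2) (ZMod p)) = x ∧
      Matrix.trace (AB.2 : Matrix (Fin 2) (Fin 2) (ZMod p)) = y ∧
      Matrix.trace ((AB.1 * AB.2 : Matrix.SpecialLinearGroup (Fin 2) (ZMod p)) :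
        Matrix (Fin 2) (Fin 2) (ZMod p)) = z} = p * (p ^ 2 - 1) := by
  haveI : Fact p.Prime := ⟨hp⟩
  have hF : ringChar (ZMod p) ≠ 2 := by rw [ZMod.ringChar_zmod_n]; omega
  have h2 : (2 : ZMod p) ≠ 0 := Ring.two_ne_zero hF
  rw [Tower.toQuad h2]
  have h := Tower.total hF (x ^ 2 - 4) (y ^ 2 - 4) (2 * z - x * y) (by
    have : (x ^ 2 - 4) * (y ^ 2 - 4) - (2 * z - x * y) ^ 2 =
      -(2 * 2) * (x ^ 2 + y ^ 2 + z ^ 2 - x * y * z - 4) := by ring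
    rw [this]
    exact mul_ne_zero (neg_ne_zero.mpr (mul_ne_zero h2 h2)) (sub_ne_zero.mpr hns))
  rw [ZMod.card] at h
  zify [Nat.one_le_pow 2 p hp.pos]
  exact h
end

section
/- Let p be a prime with p > 5 and let A, B ∈ SL(2, 𝔽_p) be such that the subgroup of PSL₂(𝔽_p) generated by the images of A and B is isomorphic to the alternating group A₅. Then k = tr(A B A⁻¹ B⁻¹) satisfies k = 1 or k² − k − 1 = 0, and each trace t ∈ {tr(A), tr(B), tr(AB)} satisfies t = 0, or t² = 1, or t⁴ − 3t² + 1 = 0. -/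
def IcoRel {G : Type*} [Group G] (u v : G) : Prop :=
  u ^ 2 = 1 ∧ ((v ^ 3 = 1 ∧ (u * v) ^ 5 = 1) ∨ (v ^ 5 = 1 ∧ (u * v) ^ 3 = 1) ∨
    (v ^ 5 = 1 ∧ (u * v) ^ 5 = 1 ∧ (u * v * u⁻¹ * v⁻¹) ^ 3 = 1))

instance {G : Type*} [Group G] [DecidableEq G] (u v : G) : Decidable (IcoRel u v) := by
  unfold IcoRel; infer_instance

def IcoSome {G : Type*} [Group G] (a b : G) : Prop :=
  IcoRel a b ∨ IcoRel (a * b) b ∨ IcoRel b a ∨ IcoRel (a * b⁻¹) b ∨ IcoRel (a * (a * b)) (a * b) ∨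
  IcoRel (a * (a⁻¹ * b)⁻¹) (a⁻¹ * b) ∨ IcoRel (a * b * b) b ∨ IcoRel (a * b⁻¹ * b⁻¹) b ∨
  IcoRel (a * (a * b) * (a * b)) (a * b)

instance {G : Type*} [Group G] [DecidableEq G] (u v : G) : Decidable (IcoSome u v) := by
  unfold IcoSome; infer_instance

def IcoBad (a b : Equiv.Perm (Fin 5)) : Prop :=
  (∃ i, a i = i ∧ b i = i) ∨
  (∃ i j, i < j ∧ ((a i = i ∧ a j = j) ∨ (a i = j ∧ a j = i)) ∧ ((b i = i ∧ b j = j) ∨ (b i = j ∧ b j = i))) ∨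
  ((a * (a * b * a⁻¹ * b⁻¹) * a⁻¹ = (a * b * a⁻¹ * b⁻¹) ∨ a * (a * b * a⁻¹ * b⁻¹) * a⁻¹ = (a * b * a⁻¹ * b⁻¹)⁻¹) ∧
   (b * (a * b * a⁻¹ * b⁻¹) * b⁻¹ = (a * b * a⁻¹ * b⁻¹) ∨ b * (a * b * a⁻¹ * b⁻¹) * b⁻¹ = (a * b * a⁻¹ * b⁻¹)⁻¹))

instance (u v) : Decidable (IcoBad u v) := by
  unfold IcoBad; infer_instance


def r2 : Equiv.Perm (Fin 5) := ⟨![1,0,3,2,4], ![1,0,3,2,4], by decide, by decide⟩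
def r3 : Equiv.Perm (Fin 5) := ⟨![1,2,0,3,4], ![2,0,1,3,4], by decide, by decide⟩
def r5 : Equiv.Perm (Fin 5) := ⟨![1,2,3,4,0], ![4,0,1,2,3], by decide, by decide⟩
theorem ico_b : ∀ b : alternatingGroup (Fin 5), 
   (b.1 ^ 2 = 1 ∨ b.1 ^ 3 = 1 ∨ b.1 ^ 5 = 1)  := by
  decide +kernel
theorem ico_a : ∀ b : alternatingGroup (Fin 5), 
   (∃ s : Equiv.Perm (Fin 5),
   s * b.1 = 1 * s ∨ s * b.1 = r2 * s ∨ s * b.1 = r3 * s ∨ s * b.1 = r5 * s)  := by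
  decide +kernel
theorem ico_all : ∀ b : alternatingGroup (Fin 5), 
  (IcoBad r2 b.1 ∨ IcoSome r2 b.1) ∧ (IcoBad r3 b.1 ∨ IcoSome r3 b.1) ∧
  (IcoBad r5 b.1 ∨ IcoSome r5 b.1) := by
  decide +kernel
abbrev SLp (p : ℕ) := Matrix.SpecialLinearGroup (Fin 2) (ZMod p)

section alg
variable {p : ℕ} [Fact p.Prime]

lemma ico_center_of {U : SLp p} (h1 : U.1 0 1 = 0) (h2 : U.1 1 0 = 0) (h3 : U.1 0 0 - U.1 1 1 = 0) :
    U ∈ Subgroup.center (SLp p) := by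
  rw [Matrix.SpecialLinearGroup.mem_center_iff]
  have hd := U.2
  rw [Matrix.det_fin_two, h1] at hd
  have h3' : U.1 1 1 = U.1 0 0 := by linear_combination -h3
  refine ⟨U.1 0 0, ?_, ?_⟩
  · rw [h3'] at hd
    simp only [Fintype.card_fin]; linear_combination hd
  · ext i j
    fin_cases i <;> fin_cases j <;> simp [h1, h2, h3']

lemma ico_of_center {U : SLp p} (h : U ∈ Subgroup.center (SLp p)) :
    U.1 0 1 = 0 ∧ U.1 1 0 = 0 ∧ U.1 0 0 - U.1 1 1 = 0 := by
  rw [Matrix.SpecialLinearGroup.mem_center_iff] at h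
  obtain ⟨r, -, h⟩ := h
  rw [← h]
  simp

lemma ico_det (U : SLp p) : U.1 0 0 * U.1 1 1 - U.1 0 1 * U.1 1 0 = 1 := by
  have := U.2; rwa [Matrix.det_fin_two] at this

lemma ico_scal {U : SLp p} (hU : U ∉ Subgroup.center (SLp p)) {f : ZMod p}
   (h1 : f * U.1 0 1 = 0) (h2 : f * U.1 1 0 = 0) (h3 : f * (U.1 0 0 - U.1 1 1) = 0) : f = 0 := by
  by_contra hf
  simp only [mul_eq_zero, hf, false_or] at h1 h2 h3
  exact hU (ico_center_of h1 h2 h3)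

lemma ico_sq (U : SLp p) : U.1 ^ 2 = U.1.trace • U.1 - 1 := by
  have hd := ico_det U
  ext i j
  fin_cases i <;> fin_cases j <;> simp [pow_two, Matrix.mul_apply, Fin.sum_univ_two, Matrix.trace_fin_two] <;> grind

lemma ico_lin {U : SLp p} (hU : U ∉ Subgroup.center (SLp p)) {n : ℕ} {f g : ZMod p}
    (h : U ^ n ∈ Subgroup.center (SLp p)) (hn : U.1 ^ n = f • U.1 + g • 1) : f = 0 := by
  obtain ⟨h1, h2, h3⟩ := ico_of_center h
  have e : (U ^ n).1 = f • U.1 + g • 1 := by rw [← hn]; simp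
  rw [e] at h1 h2 h3
  simp at h1 h2 h3
  apply ico_scal hU
  · simpa using h1
  · simpa using h2
  · linear_combination h3

lemma ico_pow2 {U : SLp p} (hU : U ∉ Subgroup.center (SLp p))
    (h : U ^ 2 ∈ Subgroup.center (SLp p)) : U.1.trace = 0 := by
  refine ico_lin (g := -1) hU h ?_
  rw [ico_sq]; simp [sub_eq_add_neg]

lemma ico_pow3 {U : SLp p} (hU : U ∉ Subgroup.center (SLp p))
    (h : U ^ 3 ∈ Subgroup.center (SLp p)) : U.1.trace ^ 2 = 1 := by
  have : U.1.trace ^ 2 - 1 = 0 := by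
    refine ico_lin (g := - U.1.trace) hU h ?_
    have hs := ico_sq U
    have : U.1 ^ 3 = U.1 ^ 2 * U.1 := by rw [pow_succ]
    rw [this, hs, sub_mul, smul_mul_assoc, ← pow_two, hs, one_mul]
    module
  linear_combination this

lemma ico_pow5 {U : SLp p} (hU : U ∉ Subgroup.center (SLp p))
    (h : U ^ 5 ∈ Subgroup.center (SLp p)) : U.1.trace ^ 4 - 3 * U.1.trace ^ 2 + 1 = 0 := by
  refine ico_lin (g := - (U.1.trace ^ 3 - 2 * U.1.trace)) hU h ?_
  have hs := ico_sq U
  generalize U.1.trace = t at *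
  have h3 : U.1 ^ 3 = (t ^ 2 - 1) • U.1 - t • 1 := by
    rw [pow_succ, hs, sub_mul, smul_mul_assoc, ← pow_two, hs, one_mul]; module
  have h4 : U.1 ^ 4 = (t ^ 3 - 2 * t) • U.1 - (t ^ 2 - 1) • 1 := by
    rw [pow_succ, h3, sub_mul, smul_mul_assoc, smul_mul_assoc, ← pow_two, hs]
    simp only [one_mul]; module
  rw [pow_succ, h4, sub_mul, smul_mul_assoc, smul_mul_assoc, ← pow_two, hs]
  simp only [one_mul]; module

lemma ico_fricke (U V : SLp p) : (U * V * U⁻¹ * V⁻¹).1.trace =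
    U.1.trace ^ 2 + V.1.trace ^ 2 + (U * V).1.trace ^ 2 - U.1.trace * V.1.trace * (U * V).1.trace - 2 := by
  have h1 := ico_det U
  have h2 := ico_det V
  simp [Matrix.adjugate_fin_two, Matrix.trace_fin_two, Matrix.mul_apply, Fin.sum_univ_two]
  generalize U.1 0 0 = a at *
  generalize U.1 0 1 = b at *
  generalize U.1 1 0 = c at *
  generalize U.1 1 1 = d at *
  generalize V.1 0 0 = e at *
  generalize V.1 0 1 = f at *
  generalize V.1 1 0 = g at *
  generalize V.1 1 1 = h at *
  grind

def IcoQ (A B : SLp p) : Prop := A * B * A⁻¹ * B⁻¹ ∉ Subgroup.center (SLp p) ∧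
  ¬ ((A * B * A⁻¹ * B⁻¹).1.trace = 1 ∨
    (A * B * A⁻¹ * B⁻¹).1.trace ^ 2 - (A * B * A⁻¹ * B⁻¹).1.trace - 1 = 0)

lemma ico_trace_conj (g C : SLp p) : (g * C * g⁻¹).1.trace = C.1.trace := by
  have : (g * C * g⁻¹).1 = (g * C).1 * (g⁻¹).1 := rfl
  rw [this, Matrix.trace_mul_comm]
  have : (g⁻¹).1 * (g * C).1 = (g⁻¹ * (g * C)).1 := rfl
  rw [this, inv_mul_cancel_left]

lemma ico_trace_inv (C : SLp p) : (C⁻¹).1.trace = C.1.trace := by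
  simp [Matrix.adjugate_fin_two, Matrix.trace_fin_two, add_comm]

lemma IcoQ.conj {A B A' B' : SLp p} (g : SLp p) (h : IcoQ A B)
    (e : A' * B' * A'⁻¹ * B'⁻¹ = g * (A * B * A⁻¹ * B⁻¹) * g⁻¹) : IcoQ A' B' := by
  unfold IcoQ at *
  rw [e, ico_trace_conj]
  refine ⟨fun hc => h.1 ?_, h.2⟩
  have := (inferInstance : (Subgroup.center (SLp p)).Normal).conj_mem _ hc g⁻¹
  simpa [mul_assoc] using this

lemma IcoQ.swap {A B : SLp p} (h : IcoQ A B) : IcoQ B A := by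
  unfold IcoQ at *
  have e : B * A * B⁻¹ * A⁻¹ = (A * B * A⁻¹ * B⁻¹)⁻¹ := by group
  rw [e, ico_trace_inv, inv_mem_iff]
  exact h

lemma IcoQ.R {A B : SLp p} (h : IcoQ A B) : IcoQ (A * B) B := h.conj 1 (by group)
lemma IcoQ.r {A B : SLp p} (h : IcoQ A B) : IcoQ (A * B⁻¹) B := h.conj 1 (by group)
lemma IcoQ.L {A B : SLp p} (h : IcoQ A B) : IcoQ A (A * B) := h.conj A (by group)
lemma IcoQ.l {A B : SLp p} (h : IcoQ A B) : IcoQ A (A⁻¹ * B) := h.conj A⁻¹ (by group)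

lemma ico_nc1 {A B : SLp p} (h : A * B * A⁻¹ * B⁻¹ ∉ Subgroup.center (SLp p)) :
    A ∉ Subgroup.center (SLp p) ∧ B ∉ Subgroup.center (SLp p) ∧
      A * B ∉ Subgroup.center (SLp p) := by
  have hab : A * B ≠ B * A := by
    intro e
    apply h
    rw [e]; simp
  refine ⟨fun hc => hab ?_, fun hc => hab ?_, fun hc => hab ?_⟩
  · exact (Subgroup.mem_center_iff.1 hc B).symm
  · exact Subgroup.mem_center_iff.1 hc A
  · have := Subgroup.mem_center_iff.1 hc A
    rw [mul_assoc] at this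
    exact mul_left_cancel this

lemma ico_final (h5 : (5 : ZMod p) ≠ 0) {U V : SLp p} (hQ : IcoQ U V)
    (h : IcoRel (QuotientGroup.mk U : SLp p ⧸ Subgroup.center (SLp p)) (QuotientGroup.mk V)) :
    False := by
  obtain ⟨hC, hk⟩ := hQ
  obtain ⟨hU, hV, hW⟩ := ico_nc1 hC
  unfold IcoRel at h
  simp only [← QuotientGroup.mk_mul, ← QuotientGroup.mk_pow, ← QuotientGroup.mk_inv,
    QuotientGroup.eq_one_iff] at h
  obtain ⟨h2, h⟩ := h
  have hx := ico_pow2 hU h2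
  have hf := ico_fricke U V
  rcases h with ⟨a, b⟩ | ⟨a, b⟩ | ⟨a, b, c⟩
  · have a := ico_pow3 hV a
    have b := ico_pow5 hW b
    apply hk
    right
    rw [hf, hx, a]
    linear_combination b
  · have a := ico_pow5 hV a
    have b := ico_pow3 hW b
    apply hk
    right
    rw [hf, hx, b]
    linear_combination a
  · have a := ico_pow5 hV a
    have b := ico_pow5 hW b
    have c := ico_pow3 hC c
    apply hk
    left
    rw [hf, hx] at c ⊢
    generalize V.1.trace = y at *
    generalize (U * V).1.trace = z at *
    have : (y ^ 2 - z ^ 2) * (y ^ 2 + z ^ 2 - 3) = 0 := by linear_combination a - b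
    rcases mul_eq_zero.1 this with e | e
    · exfalso
      apply h5
      have e' : z ^ 2 = y ^ 2 := by linear_combination -e
      rw [e'] at c
      have l : 4 * y ^ 2 - 1 = 0 := by linear_combination c - 4 * a
      linear_combination 16 * a - (4 * y ^ 2 - 11) * l
    · linear_combination e
end alg

theorem ico_main {a b : alternatingGroup (Fin 5)} (hab : a * b ≠ b * a)
    (h : Subgroup.closure {a, b} = ⊤) (hbad : IcoBad a.1 b.1) : False := by
  have key : ∀ P : alternatingGroup (Fin 5) → Prop, P a → P b → P 1 → (∀ x y, P x → P y → P (x * y)) →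
      (∀ x, P x → P x⁻¹) → ∀ g, P g := by
    intro P ha hb h1 hm hi g
    have hg : g ∈ Subgroup.closure {a, b} := by rw [h]; trivial
    induction hg using Subgroup.closure_induction with
    | mem x hx => rcases hx with rfl | rfl <;> assumption
    | one => exact h1
    | mul x y _ _ hx hy => exact hm x y hx hy
    | inv x _ hx => exact hi x hx
  rcases hbad with ⟨i, hi⟩ | ⟨i, j, hij, hi, hj⟩ | ⟨h1, h2⟩
  · have := key (fun g => g.1 i = i) hi.1 hi.2 rfl
      (fun x y hx hy => by simp only [Subgroup.coe_mul, Equiv.Perm.mul_apply, hx, hy])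
      (fun x hx => by simp only [Subgroup.coe_inv]; rw [Equiv.Perm.inv_eq_iff_eq, hx])
    have h1 := this ⟨finRotate 5, Equiv.Perm.mem_alternatingGroup.2 (by decide)⟩
    clear this hi
    revert h1; revert i; decide
  · have := key (fun g => (g.1 i = i ∧ g.1 j = j) ∨ (g.1 i = j ∧ g.1 j = i)) hi hj (Or.inl ⟨rfl, rfl⟩)
      (fun x y hx hy => by
        simp only [Subgroup.coe_mul, Equiv.Perm.mul_apply]
        rcases hx with ⟨hx, hx'⟩ | ⟨hx, hx'⟩ <;> rcases hy with ⟨hy, hy'⟩ | ⟨hy, hy'⟩ <;> simp [hx, hx', hy, hy'])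
      (fun x hx => by
        simp only [Subgroup.coe_inv, Equiv.Perm.inv_eq_iff_eq]
        rcases hx with ⟨hx, hx'⟩ | ⟨hx, hx'⟩ <;> simp [hx, hx'])
    have h1 := this ⟨finRotate 5, Equiv.Perm.mem_alternatingGroup.2 (by decide)⟩
    clear this hi hj
    revert h1 hij; revert i j; decide
  · set c := a * b * a⁻¹ * b⁻¹ with hc
    have h1' : a * c * a⁻¹ = c ∨ a * c * a⁻¹ = c⁻¹ := by
      rcases h1 with h1 | h1
      · left; exact Subtype.ext h1
      · right; exact Subtype.ext h1
    have h2' : b * c * b⁻¹ = c ∨ b * c * b⁻¹ = c⁻¹ := by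
      rcases h2 with h1 | h1
      · left; exact Subtype.ext h1
      · right; exact Subtype.ext h1
    have hP := key (fun g => g * c * g⁻¹ = c ∨ g * c * g⁻¹ = c⁻¹) h1' h2' (by simp)
      (fun x y hx hy => by
        have e : x * y * c * (x * y)⁻¹ = x * (y * c * y⁻¹) * x⁻¹ := by group
        rw [e]
        rcases hy with hy | hy
        · rwa [hy]
        · rw [hy]
          have e : x * c⁻¹ * x⁻¹ = (x * c * x⁻¹)⁻¹ := by group
          rw [e]
          rcases hx with hx | hx <;> simp [hx])
      (fun x hx => by
        rcases hx with hx | hx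
        · left; nth_rewrite 1 [← hx]; group
        · right
          have : c = (x * c * x⁻¹)⁻¹ := by rw [hx, inv_inv]
          nth_rewrite 1 [this]; group)
    have hn : (Subgroup.zpowers c).Normal := by
      refine ⟨fun n hn g => ?_⟩
      obtain ⟨k, rfl⟩ := Subgroup.mem_zpowers_iff.1 hn
      rw [← conj_zpow]
      rcases hP g with e | e <;> rw [e]
      · exact Subgroup.zpow_mem _ (Subgroup.mem_zpowers c) k
      · exact Subgroup.zpow_mem _ (Subgroup.inv_mem _ (Subgroup.mem_zpowers c)) k
    rcases hn.eq_bot_or_eq_top with e | e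
    · rw [Subgroup.zpowers_eq_bot] at e
      apply hab
      have : a * b = c * (b * a) := by rw [hc]; group
      rw [this, e, one_mul]
    · apply hab
      have ha : a ∈ Subgroup.zpowers c := by rw [e]; trivial
      have hb : b ∈ Subgroup.zpowers c := by rw [e]; trivial
      have comm : ∀ x ∈ Subgroup.zpowers c, ∀ y ∈ Subgroup.zpowers c, x * y = y * x := by
        intro x hx y hy
        obtain ⟨k, rfl⟩ := Subgroup.mem_zpowers_iff.1 hx
        obtain ⟨l, rfl⟩ := Subgroup.mem_zpowers_iff.1 hy
        rw [← zpow_add, ← zpow_add, add_comm]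
      exact comm a ha b hb

theorem ico_exists {H : Type*} [Group H] (e0 : H ≃* alternatingGroup (Fin 5)) (α β : H)
    (hαβ : α * β ≠ β * α) (hcl : Subgroup.closure {α, β} = ⊤) : IcoSome α β := by
  obtain ⟨s, hs⟩ := ico_a (e0 α)
  let e : H ≃* alternatingGroup (Fin 5) := e0.trans (MulAut.conjNormal s)
  have hcl' : Subgroup.closure {e α, e β} = ⊤ := by
    have h1 := congrArg (Subgroup.map e.toMonoidHom) hcl
    rw [MonoidHom.map_closure, Set.image_pair] at h1
    rw [Subgroup.map_top_of_surjective _ e.surjective] at h1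
    exact h1
  have hab : e α * e β ≠ e β * e α := by
    rw [← map_mul, ← map_mul]
    exact fun h => hαβ (e.injective h)
  have ha : (e α).1 = s * (e0 α).1 * s⁻¹ := rfl
  have hnb := ico_main hab hcl'
  have hS : IcoSome (e α).1 (e β).1 := by
    have hb := ico_all (e β)
    rcases hs with hs | hs | hs | hs <;> rw [hs, mul_inv_cancel_right] at ha
    · exact absurd (by rw [show e α = 1 from Subtype.ext ha]; simp) hab
    · rw [ha] at hnb ⊢
      exact hb.1.resolve_left hnb
    · rw [ha] at hnb ⊢
      exact hb.2.1.resolve_left hnb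
    · rw [ha] at hnb ⊢
      exact hb.2.2.resolve_left hnb
  let ψ : H →* Equiv.Perm (Fin 5) := (alternatingGroup (Fin 5)).subtype.comp e.toMonoidHom
  have hψ : Function.Injective ψ := Subtype.val_injective.comp e.injective
  have hR : ∀ x y : H, IcoRel (ψ x) (ψ y) → IcoRel x y := by
    intro x y h
    unfold IcoRel at *
    simpa only [← map_mul, ← map_pow, ← map_inv, map_eq_one_iff ψ hψ] using h
  have hS' : IcoSome (ψ α) (ψ β) := hS
  unfold IcoSome at *
  simp only [← map_mul, ← map_inv] at hS'
  rcases hS' with h | h | h | h | h | h | h | h | h <;> have h := hR _ _ h <;> simp only [h, true_or, or_true]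

theorem icosahedral_pair_traces (p : ℕ) (hp : p.Prime) (hp5 : 5 < p)
    (A B : Matrix.SpecialLinearGroup (Fin 2) (ZMod p))
    (hiso : Nonempty
      ((Subgroup.closure {(QuotientGroup.mk A :
          Matrix.SpecialLinearGroup (Fin 2) (ZMod p) ⧸
            Subgroup.center (Matrix.SpecialLinearGroup (Fin 2) (ZMod p))),
        QuotientGroup.mk B}) ≃* alternatingGroup (Fin 5))) :
    (Matrix.trace ((A * B * A⁻¹ * B⁻¹ : Matrix.SpecialLinearGroup (Fin 2) (ZMod p)) :
        Matrix (Fin 2) (Fin 2) (ZMod p)) = 1 ∨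
      Matrix.trace ((A * B * A⁻¹ * B⁻¹ : Matrix.SpecialLinearGroup (Fin 2) (ZMod p)) :
          Matrix (Fin 2) (Fin 2) (ZMod p)) ^ 2 -
        Matrix.trace ((A * B * A⁻¹ * B⁻¹ : Matrix.SpecialLinearGroup (Fin 2) (ZMod p)) :
          Matrix (Fin 2) (Fin 2) (ZMod p)) - 1 = 0) ∧
    (∀ t : ZMod p,
      (t = Matrix.trace (A : Matrix (Fin 2) (Fin 2) (ZMod p)) ∨
        t = Matrix.trace (B : Matrix (Fin 2) (Fin 2) (ZMod p)) ∨
        t = Matrix.trace ((A * B : Matrix.SpecialLinearGroup (Fin 2) (ZMod p)) :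
          Matrix (Fin 2) (Fin 2) (ZMod p))) →
      t = 0 ∨ t ^ 2 = 1 ∨ t ^ 4 - 3 * t ^ 2 + 1 = 0) := by
  have : Fact p.Prime := ⟨hp⟩
  have h5 : (5 : ZMod p) ≠ 0 := by
    intro h
    have : ((5 : ℕ) : ZMod p) = 0 := by exact_mod_cast h
    rw [ZMod.natCast_eq_zero_iff] at this
    have := Nat.le_of_dvd (by norm_num) this
    omega
  obtain ⟨e0⟩ := hiso
  set π : SLp p →* SLp p ⧸ Subgroup.center (SLp p) := QuotientGroup.mk' _ with hπ
  set H : Subgroup (SLp p ⧸ Subgroup.center (SLp p)) := Subgroup.closure {π A, π B} with hH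
  let e : H ≃* alternatingGroup (Fin 5) := e0
  let α : H := ⟨π A, Subgroup.subset_closure (by simp)⟩
  let β : H := ⟨π B, Subgroup.subset_closure (by simp)⟩
  have hcl : Subgroup.closure {α, β} = ⊤ := by
    apply Subgroup.map_injective H.subtype_injective
    rw [MonoidHom.map_closure, Set.image_pair, ← MonoidHom.range_eq_map, Subgroup.range_subtype]
    rfl
  have hαβ : α * β ≠ β * α := by
    intro hc
    have hall : ∀ x y : H, x * y = y * x := by
      have h1 : ∀ x : H, x ∈ Subgroup.closure {α, β} := fun x => by rw [hcl]; trivial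
      have hcc : ∀ x ∈ ({α, β} : Set H), ∀ y ∈ ({α, β} : Set H), x * y = y * x := by
        rintro x (rfl | rfl) y (rfl | rfl)
        · rfl
        · exact hc
        · exact hc.symm
        · rfl
      letI := Subgroup.closureCommGroupOfComm hcc
      intro x y
      exact congrArg Subtype.val (mul_comm (⟨x, h1 x⟩ : Subgroup.closure {α, β}) ⟨y, h1 y⟩)
    have hA : ∀ x y : alternatingGroup (Fin 5), x * y = y * x := by
      intro x y
      apply e.symm.injective
      rw [map_mul, map_mul, hall]
    have := congrArg (fun g => g.1 2) (hA ⟨r3, Equiv.Perm.mem_alternatingGroup.2 (by decide)⟩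
      ⟨r5, Equiv.Perm.mem_alternatingGroup.2 (by decide)⟩)
    revert this
    decide
  have hmem : ∀ X : SLp p, π X = 1 ↔ X ∈ Subgroup.center (SLp p) :=
    fun X => QuotientGroup.eq_one_iff X
  have hC : A * B * A⁻¹ * B⁻¹ ∉ Subgroup.center (SLp p) := by
    rw [← hmem]
    intro h
    apply hαβ
    apply Subtype.ext
    change π A * π B = π B * π A
    rw [map_mul, map_mul, map_mul, map_inv, map_inv, mul_inv_eq_one, mul_inv_eq_iff_eq_mul] at h
    exact h
  constructor
  · by_contra hk
    have hQ : IcoQ A B := ⟨hC, hk⟩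
    have hS := ico_exists e α β hαβ hcl
    have hR : ∀ x y : H, IcoRel x y → IcoRel x.1 y.1 := by
      intro x y h
      unfold IcoRel at *
      simpa only [← Subgroup.coe_mul, ← Subgroup.coe_pow, ← Subgroup.coe_inv, OneMemClass.coe_eq_one]
        using h
    rcases hS with h | h | h | h | h | h | h | h | h <;> have h := hR _ _ h
    · exact ico_final h5 hQ h
    · exact ico_final h5 hQ.R h
    · exact ico_final h5 hQ.swap h
    · exact ico_final h5 hQ.r h
    · exact ico_final h5 hQ.L.R h
    · exact ico_final h5 hQ.l.r h
    · exact ico_final h5 hQ.R.R h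
    · exact ico_final h5 hQ.r.r h
    · exact ico_final h5 hQ.L.R.R h
  · obtain ⟨hA, hB, hAB⟩ := ico_nc1 hC
    have hT : ∀ (X : SLp p) (x : H), x.1 = π X → X ∉ Subgroup.center (SLp p) →
        X.1.trace = 0 ∨ X.1.trace ^ 2 = 1 ∨ X.1.trace ^ 4 - 3 * X.1.trace ^ 2 + 1 = 0 := by
      intro X x hx hX
      have ho : x ^ 2 = 1 ∨ x ^ 3 = 1 ∨ x ^ 5 = 1 := by
        have := ico_b (e x)
        simpa only [← Subgroup.coe_pow, ← map_pow, OneMemClass.coe_eq_one, map_eq_one_iff e e.injective]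
          using this
      have hq : ∀ n : ℕ, x ^ n = 1 → X ^ n ∈ Subgroup.center (SLp p) := by
        intro n hn
        rw [← hmem, map_pow, ← hx, ← Subgroup.coe_pow, hn]
        rfl
      rcases ho with h | h | h
      · exact Or.inl (ico_pow2 hX (hq _ h))
      · exact Or.inr (Or.inl (ico_pow3 hX (hq _ h)))
      · exact Or.inr (Or.inr (ico_pow5 hX (hq _ h)))
    intro t ht
    rcases ht with rfl | rfl | rfl
    · exact hT A α rfl hA
    · exact hT B β rfl hB
    · exact hT (A * B) (α * β) rfl hAB
end

section
/- Let p be an odd prime and let a, b ∈ 𝔽_p be nonzero with a ≠ b. Let N be the number of triples (x, y, z) ∈ 𝔽_p³ satisfying x² + a = y² and x² + b = z². Then |N − (p − 3)| ≤ 2√p (as real numbers). -/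
namespace TQ
open Polynomial

section curve
variable {K : Type*} [Field K] [DecidableEq K]

abbrev crv (α β : K) : WeierstrassCurve.Affine K := ⟨0, α, 0, β, 0⟩

def xc {α β : K} : (crv α β).Point → K
  | .zero => 1
  | .some x _ _ => x

def zc {α β : K} : (crv α β).Point → K
  | .zero => 0
  | .some _ _ _ => 1

lemma xz_ne {α β : K} (S : (crv α β).Point) : xc S ≠ 0 ∨ zc S ≠ 0 := by
  cases S <;> simp [xc, zc]

lemma addsub {α β s v : K} (h2 : (2 : K) ≠ 0) (hv : v ≠ 0) (hT : (crv α β).Nonsingular s v)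
    (S : (crv α β).Point) : ∃ c : K, c ≠ 0 ∧
      zc (S + .some s v hT) * zc (S - .some s v hT) = c * (xc S - s * zc S) ^ 2 ∧
      xc (S + .some s v hT) * xc (S - .some s v hT) = c * (xc S * s - β * zc S) ^ 2 ∧
      xc (S + .some s v hT) * zc (S - .some s v hT) +
        xc (S - .some s v hT) * zc (S + .some s v hT) =
        c * (2 * (xc S + s * zc S) * (xc S * s + β * zc S) + 4 * α * xc S * zc S * s) := by
  have eT : v ^ 2 = s ^ 3 + α * s ^ 2 + β * s := by
    have := hT.1
    rw [WeierstrassCurve.Affine.equation_iff] at this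
    simpa using this
  have hvv : v ≠ (crv α β).negY s v := by
    simp only [WeierstrassCurve.Affine.negY]
    intro h
    apply hv
    have : 2 * v = 0 := by linear_combination h
    simpa [h2] using this
  have dbl : ∃ c : K, c ≠ 0 ∧ c * (4 * v ^ 2) = 1 ∧
      zc (WeierstrassCurve.Affine.Point.some s v hT + .some s v hT) = 1 ∧
      xc (WeierstrassCurve.Affine.Point.some s v hT + .some s v hT) = c * (s ^ 2 - β) ^ 2 := by
    have h4 : (4 : K) ≠ 0 := by
      have : (4 : K) = 2 * 2 := by norm_num
      rw [this]; exact mul_ne_zero h2 h2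
    refine ⟨(4 * v ^ 2)⁻¹, ?_, ?_, ?_, ?_⟩
    · exact inv_ne_zero (mul_ne_zero h4 (pow_ne_zero _ hv))
    · field_simp
    · rw [WeierstrassCurve.Affine.Point.add_self_of_Y_ne hvv]; rfl
    · rw [WeierstrassCurve.Affine.Point.add_self_of_Y_ne hvv]
      simp only [xc, WeierstrassCurve.Affine.addX]
      rw [WeierstrassCurve.Affine.slope_of_Y_ne rfl hvv]
      simp only [WeierstrassCurve.Affine.negY]
      have : v - (-v - 0 * s - 0) = 2 * v := by ring
      rw [this]
      field_simp
      ring_nf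
      have e4 : v ^ 4 = (s ^ 3 + α * s ^ 2 + β * s) ^ 2 := by rw [← eT]; ring
      simp only [e4, eT]
      ring
  cases S with
  | zero =>
    refine ⟨1, one_ne_zero, ?_⟩
    rw [← WeierstrassCurve.Affine.Point.zero_def, zero_add, zero_sub,
      WeierstrassCurve.Affine.Point.neg_some, WeierstrassCurve.Affine.Point.zero_def]
    simp only [xc, zc]
    refine ⟨?_, ?_, ?_⟩ <;> ring
  | some x y h =>
    have eS : y ^ 2 = x ^ 3 + α * x ^ 2 + β * x := by
      have := h.1
      rw [WeierstrassCurve.Affine.equation_iff] at this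
      simpa using this
    by_cases hx : x = s
    · obtain ⟨c, hc, hc1, hz, hxx⟩ := dbl
      rcases (WeierstrassCurve.Affine.Point.X_eq_iff (h₁ := h) (h₂ := hT)).1 hx with e | e
      · rw [e, sub_self, hz, hxx, WeierstrassCurve.Affine.Point.zero_def]
        simp only [xc, zc]
        refine ⟨c, hc, ?_, ?_, ?_⟩
        · ring
        · ring
        · rw [eT] at hc1
          linear_combination -hc1
      · rw [e, neg_add_cancel, show -WeierstrassCurve.Affine.Point.some s v hT - .some s v hT =
          -(WeierstrassCurve.Affine.Point.some s v hT + .some s v hT) by abel]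
        have n1 : ∀ R : (crv α β).Point, xc (-R) = xc R := by
          intro R; cases R <;> rfl
        have n2 : ∀ R : (crv α β).Point, zc (-R) = zc R := by
          intro R; cases R <;> rfl
        rw [n1, n2, n1, n2, hz, hxx, WeierstrassCurve.Affine.Point.zero_def]
        simp only [xc, zc]
        refine ⟨c, hc, ?_, ?_, ?_⟩
        · ring
        · ring
        · rw [eT] at hc1
          linear_combination -hc1
    · have hxs : x - s ≠ 0 := sub_ne_zero.2 hx
      refine ⟨((x - s) ^ 2)⁻¹, inv_ne_zero (pow_ne_zero _ hxs), ?_⟩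
      rw [sub_eq_add_neg, WeierstrassCurve.Affine.Point.neg_some,
        WeierstrassCurve.Affine.Point.add_of_X_ne hx, WeierstrassCurve.Affine.Point.add_of_X_ne hx]
      simp only [xc, zc, WeierstrassCurve.Affine.addX]
      rw [WeierstrassCurve.Affine.slope_of_X_ne hx, WeierstrassCurve.Affine.slope_of_X_ne hx]
      simp only [WeierstrassCurve.Affine.negY]
      have y4 : y ^ 4 = (x ^ 3 + α * x ^ 2 + β * x) ^ 2 := by rw [← eS]; ring
      have v4 : v ^ 4 = (s ^ 3 + α * s ^ 2 + β * s) ^ 2 := by rw [← eT]; ring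
      refine ⟨?_, ?_, ?_⟩
      · field_simp
      · field_simp
        ring_nf
        simp only [y4, v4, eS, eT]
        ring
      · field_simp
        ring_nf
        simp only [y4, v4, eS, eT]
        ring

end curve
end TQ

namespace TQ
open Polynomial

section poly
variable {F : Type*} [Field F]

def Prim (a b c : F[X]) : Prop := ∀ g : F[X], Prime g → g ∣ a → g ∣ b → g ∣ c → False

lemma prim_unit {K : Type*} [Field K] [Algebra F[X] K] [IsFractionRing F[X] K]
    {a b c a' b' c' : F[X]} {κ : K} (hκ : κ ≠ 0) (h : Prim a b c) (h' : Prim a' b' c')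
    (ha : algebraMap F[X] K a = κ * algebraMap F[X] K a')
    (hb : algebraMap F[X] K b = κ * algebraMap F[X] K b')
    (hc : algebraMap F[X] K c = κ * algebraMap F[X] K c') :
    ∃ u : F[X], IsUnit u ∧ a = u * a' ∧ b = u * b' ∧ c = u * c' := by
  have inj := IsFractionRing.injective F[X] K
  obtain ⟨n, m, hco, hnm⟩ := IsFractionRing.exists_reduced_fraction (A := F[X]) κ
  have hm0 : algebraMap F[X] K m ≠ 0 := by
    exact (map_ne_zero_iff _ inj).2 (nonZeroDivisors.ne_zero m.2)
  have hk : κ * algebraMap F[X] K m = algebraMap F[X] K n := by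
    rw [← hnm, IsFractionRing.mk'_eq_div]; field_simp
  have key : ∀ {x x' : F[X]}, algebraMap F[X] K x = κ * algebraMap F[X] K x' →
      m * x = n * x' := by
    intro x x' hx
    apply inj
    rw [map_mul, map_mul, hx, ← hk]; ring
  have hn0 : n ≠ 0 := by
    rintro rfl
    simp [hm0, hκ] at hk
  have hmm0 : (m : F[X]) ≠ 0 := nonZeroDivisors.ne_zero m.2
  have hn : IsUnit n := by
    by_contra hu
    obtain ⟨g, hg, hgn⟩ := WfDvdMonoid.exists_irreducible_factor hu hn0
    have hgp := hg.prime
    have hgm : ¬ g ∣ (m : F[X]) := fun h => hg.not_isUnit (hco hgn h)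
    refine h g hgp ?_ ?_ ?_
    · exact (hgp.dvd_or_dvd ((key ha) ▸ dvd_mul_of_dvd_left hgn _ : g ∣ m * a)).resolve_left hgm
    · exact (hgp.dvd_or_dvd ((key hb) ▸ dvd_mul_of_dvd_left hgn _ : g ∣ m * b)).resolve_left hgm
    · exact (hgp.dvd_or_dvd ((key hc) ▸ dvd_mul_of_dvd_left hgn _ : g ∣ m * c)).resolve_left hgm
  have hm : IsUnit (m : F[X]) := by
    by_contra hu
    obtain ⟨g, hg, hgn⟩ := WfDvdMonoid.exists_irreducible_factor hu hmm0
    have hgp := hg.prime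
    have hgm : ¬ g ∣ n := fun h => hg.not_isUnit (hco h hgn)
    refine h' g hgp ?_ ?_ ?_
    · exact (hgp.dvd_or_dvd ((key ha) ▸ dvd_mul_of_dvd_left hgn _ : g ∣ n * a')).resolve_left hgm
    · exact (hgp.dvd_or_dvd ((key hb) ▸ dvd_mul_of_dvd_left hgn _ : g ∣ n * b')).resolve_left hgm
    · exact (hgp.dvd_or_dvd ((key hc) ▸ dvd_mul_of_dvd_left hgn _ : g ∣ n * c')).resolve_left hgm
  obtain ⟨m', hm'⟩ := hm.exists_left_inv
  refine ⟨m' * n, (IsUnit.of_mul_eq_one _ hm').mul hn, ?_, ?_, ?_⟩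
  · linear_combination m' * key ha - a * hm'
  · linear_combination m' * key hb - b * hm'
  · linear_combination m' * key hc - c * hm'

lemma prim_one {P Q P' Q' : F[X]} (h : IsCoprime P Q) (h' : IsCoprime P' Q') :
    Prim (Q * Q') (P * P') (P * Q' + P' * Q) := by
  intro g hg h1 h2 h3
  have n1 : ¬ (g ∣ P ∧ g ∣ Q) := fun ⟨x, y⟩ => hg.not_isUnit (h.isUnit_of_dvd' x y)
  have n2 : ¬ (g ∣ P' ∧ g ∣ Q') := fun ⟨x, y⟩ => hg.not_isUnit (h'.isUnit_of_dvd' x y)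
  rcases hg.dvd_or_dvd h1 with hq | hq
  · have hp : ¬ g ∣ P := fun x => n1 ⟨x, hq⟩
    have hp' : g ∣ P' := (hg.dvd_or_dvd h2).resolve_left hp
    have : g ∣ P * Q' := (dvd_add_left (dvd_mul_of_dvd_left hp' _)).1 h3
    exact n2 ⟨hp', (hg.dvd_or_dvd this).resolve_left hp⟩
  · have hp : ¬ g ∣ P' := fun x => n2 ⟨x, hq⟩
    have hp' : g ∣ P := (hg.dvd_or_dvd h2).resolve_right hp
    have : g ∣ P' * Q := (dvd_add_right (dvd_mul_of_dvd_left hp' _)).1 h3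
    exact n1 ⟨hp', (hg.dvd_or_dvd this).resolve_left hp⟩

lemma prim_two {P Q : F[X]} {A B : F} (h2 : (2 : F) ≠ 0) (hB : B ≠ 0) (hAB : A ^ 2 - 4 * B ≠ 0)
    (h : IsCoprime P Q) :
    Prim ((P - X * Q) ^ 2) ((P * X - C B * Q) ^ 2)
      (2 * (P + X * Q) * (P * X + C B * Q) + 4 * C A * P * Q * X) := by
  intro g hg h1 h2' h3
  replace h1 := hg.dvd_of_dvd_pow h1
  replace h2' := hg.dvd_of_dvd_pow h2'
  have hunit : ∀ c : F, c ≠ 0 → ¬ g ∣ C c := fun c hc hd =>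
    hg.not_isUnit (isUnit_of_dvd_unit hd (isUnit_C.2 hc.isUnit))
  have hQ : ¬ g ∣ Q := by
    intro hq
    have : g ∣ P := by
      have := dvd_add h1 (dvd_mul_of_dvd_right hq X)
      simpa using this
    exact hg.not_isUnit (h.isUnit_of_dvd' this hq)
  have e1 : g ∣ X ^ 2 - C B := by
    have : g ∣ Q * (X ^ 2 - C B) := by
      have := dvd_sub h2' (dvd_mul_of_dvd_left h1 X)
      convert this using 1; ring
    exact (hg.dvd_or_dvd this).resolve_left hQ
  have hX : ¬ g ∣ X := by
    intro hx
    have : g ∣ C B := by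
      have := dvd_sub (dvd_mul_of_dvd_left hx X) e1
      convert this using 1; ring
    exact hunit _ hB this
  have e2 : g ∣ C A * X + C 2 * C B := by
    have : g ∣ Q * (Q * (C 2 * (C 2 * (X * (C A * X + C 2 * C B))))) := by
      have := dvd_sub (dvd_sub h3 (dvd_mul_of_dvd_left h1
        (2 * (P * X + C B * Q) + 4 * X * Q * X + 4 * C A * Q * X)))
        (dvd_mul_of_dvd_left e1 (4 * X * Q ^ 2))
      convert this using 1
      simp only [map_ofNat]
      ring
    have := (hg.dvd_or_dvd this).resolve_left hQ
    have := (hg.dvd_or_dvd this).resolve_left hQ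
    have := (hg.dvd_or_dvd this).resolve_left (hunit _ h2)
    have := (hg.dvd_or_dvd this).resolve_left (hunit _ h2)
    exact (hg.dvd_or_dvd this).resolve_left hX
  have e3 : g ∣ C (B * (A ^ 2 - 4 * B)) := by
    have := dvd_sub (dvd_mul_of_dvd_left e2 (C A * X - C 2 * C B))
      (dvd_mul_of_dvd_left e1 (C A ^ 2))
    convert this using 1
    simp only [map_mul, map_sub, map_pow, map_ofNat]
    ring
  exact hunit _ (mul_ne_zero hB hAB) e3

lemma deg_half {P1 Q1 P2 Q2 R : F[X]} {d : ℕ} (hP1 : P1 ≠ 0) (hP2 : P2 ≠ 0)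
    (h1 : natDegree P1 + natDegree P2 = 2 * d + 2) (h2 : natDegree (Q1 * Q2) ≤ 2 * d)
    (h3 : natDegree R ≤ 2 * d + 1) (hR : P1 * Q2 + P2 * Q1 = R) : degree Q1 < degree P1 := by
  by_contra hlt
  push Not at hlt
  have hQ1 : Q1 ≠ 0 := by
    rintro rfl
    simp [hP1] at hlt
  have hle := natDegree_le_natDegree hlt
  have a1 : natDegree (P2 * Q1) = natDegree P2 + natDegree Q1 := natDegree_mul hP2 hQ1
  have a2 : natDegree (P1 * Q2) ≤ 2 * d := by
    by_cases hQ2 : Q2 = 0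
    · simp [hQ2]
    · rw [natDegree_mul hQ1 hQ2] at h2
      have := natDegree_mul_le (p := P1) (q := Q2)
      omega
  have a3 : natDegree (P2 * Q1) ≤ 2 * d + 1 := by
    have : P2 * Q1 = R - P1 * Q2 := by rw [← hR]; ring
    rw [this]
    exact (natDegree_sub_le _ _).trans (max_le (by omega) (by omega))
  omega

lemma deg_step {P Q P1 Q1 P2 Q2 u : F[X]} {A B : F} (hu : IsUnit u)
    (hd : degree Q < degree P)
    (e1 : Q1 * Q2 = u * (P - X * Q) ^ 2) (e2 : P1 * P2 = u * (P * X - C B * Q) ^ 2)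
    (e3 : P1 * Q2 + P2 * Q1 =
      u * (2 * (P + X * Q) * (P * X + C B * Q) + 4 * C A * P * Q * X)) :
    degree Q1 < degree P1 ∧ degree Q2 < degree P2 ∧
      natDegree P1 + natDegree P2 = 2 * natDegree P + 2 := by
  have hP : P ≠ 0 := by rintro rfl; simp at hd
  obtain ⟨d, hdd⟩ : ∃ d, natDegree P = d := ⟨_, rfl⟩
  rw [hdd]
  have hQd : natDegree Q ≤ d := hdd ▸ natDegree_le_natDegree hd.le
  have hXQ : natDegree (X * Q) ≤ d := by
    by_cases hQ : Q = 0
    · simp [hQ]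
    · have := natDegree_lt_natDegree hQ hd
      rw [natDegree_X_mul hQ]; omega
  have hPX : natDegree (P * X) = d + 1 := hdd ▸ natDegree_mul_X hP
  have hCB : natDegree (C B * Q) ≤ d := (natDegree_C_mul_le _ _).trans hQd
  have hn : natDegree (P * X - C B * Q) = d + 1 := by
    rw [natDegree_sub_eq_left_of_natDegree_lt (by omega), hPX]
  have hn0 : P * X - C B * Q ≠ 0 := by intro h; rw [h] at hn; simp at hn
  have hu0 := hu.ne_zero
  have hud : natDegree u = 0 := natDegree_eq_zero_of_isUnit hu
  have h12 : P1 * P2 ≠ 0 := by rw [e2]; exact mul_ne_zero hu0 (pow_ne_zero _ hn0)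
  have hP1 := left_ne_zero_of_mul h12
  have hP2 := right_ne_zero_of_mul h12
  have s1 : natDegree P1 + natDegree P2 = 2 * d + 2 := by
    rw [← natDegree_mul hP1 hP2, e2, natDegree_mul hu0 (pow_ne_zero _ hn0), hud, natDegree_pow, hn]
    ring
  have s2 : natDegree (Q1 * Q2) ≤ 2 * d := by
    rw [e1]
    refine natDegree_mul_le.trans ?_
    rw [hud, natDegree_pow]
    have : natDegree (P - X * Q) ≤ d := (natDegree_sub_le _ _).trans (max_le (by omega) (by omega))
    omega
  have s3 : natDegree (u * (2 * (P + X * Q) * (P * X + C B * Q) + 4 * C A * P * Q * X))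
      ≤ 2 * d + 1 := by
    refine natDegree_mul_le.trans ?_
    rw [hud, zero_add]
    refine (natDegree_add_le _ _).trans (max_le ?_ ?_)
    · refine natDegree_mul_le.trans ?_
      have t1 : natDegree (2 * (P + X * Q)) ≤ d := by
        have : (2 : F[X]) = C 2 := (map_ofNat C 2).symm
        rw [this]
        refine (natDegree_C_mul_le _ _).trans ((natDegree_add_le _ _).trans (max_le (by omega) (by omega)))
      have t2 : natDegree (P * X + C B * Q) ≤ d + 1 :=
        (natDegree_add_le _ _).trans (max_le (by omega) (by omega))
      omega
    · have : 4 * C A * P * Q * X = C (4 * A) * (P * (X * Q)) := by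
        rw [map_mul, show (C (4 : F) : F[X]) = 4 from map_ofNat C 4]; ring
      rw [this]
      refine (natDegree_C_mul_le _ _).trans (natDegree_mul_le.trans ?_)
      omega
  refine ⟨deg_half hP1 hP2 s1 s2 s3 e3, deg_half hP2 hP1 ((add_comm _ _).trans s1) (mul_comm Q1 Q2 ▸ s2) s3 ((add_comm _ _).trans e3), s1⟩

end poly
end TQ

namespace TQ
open Polynomial

section rep
variable {F : Type*} [Field F] (K : Type*) [Field K] [DecidableEq K] [Algebra F[X] K]

noncomputable def lam (A B : F) : F[X] := X ^ 3 + C A * X ^ 2 + C B * X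

noncomputable abbrev W (A B : F) : WeierstrassCurve.Affine K :=
  crv (algebraMap F[X] K (C A * lam A B)) (algebraMap F[X] K (C B * lam A B ^ 2))

variable {K}

def Rep {A B : F} (S : (W K A B).Point) (P Q : F[X]) : Prop :=
  IsCoprime P Q ∧ algebraMap F[X] K P * zc S * algebraMap F[X] K (lam A B) =
    algebraMap F[X] K Q * xc S

lemma lam_ne (A B : F) : lam A B ≠ 0 := by
  intro h
  have := congrArg (fun q => coeff q 3) h
  simp [lam, coeff_X, coeff_C_mul, coeff_X_pow] at this

lemma lam_natDegree (A B : F) : natDegree (lam A B) = 3 := by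
  unfold lam; compute_degree!

lemma propor {a b x z : K} (h : a * z = b * x) (h1 : x ≠ 0 ∨ z ≠ 0) (h2 : a ≠ 0 ∨ b ≠ 0) :
    ∃ u : K, u ≠ 0 ∧ a = u * x ∧ b = u * z := by
  by_cases hz : z = 0
  · subst hz
    have hx : x ≠ 0 := by simpa using h1
    have hb : b = 0 := by simpa [hx] using h.symm
    have ha : a ≠ 0 := by simpa [hb] using h2
    exact ⟨a / x, div_ne_zero ha hx, by field_simp, by simp [hb]⟩
  · have hb : b ≠ 0 := by
      rintro rfl
      have : a = 0 := by simpa [hz] using h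
      simp [this] at h2
    refine ⟨b / z, div_ne_zero hb hz, ?_, by field_simp⟩
    field_simp
    exact h

variable [IsFractionRing F[X] K]

lemma Rep.prop {A B : F} {S : (W K A B).Point} {P Q : F[X]} (h : Rep S P Q) :
    ∃ u : K, u ≠ 0 ∧ algebraMap F[X] K (lam A B) * algebraMap F[X] K P = u * xc S ∧
      algebraMap F[X] K Q = u * zc S := by
  have inj := IsFractionRing.injective F[X] K
  have hl : algebraMap F[X] K (lam A B) ≠ 0 := (map_ne_zero_iff _ inj).2 (lam_ne A B)
  refine propor ?_ (xz_ne S) ?_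
  · rw [← h.2]; ring
  · by_contra hh
    push Not at hh
    obtain ⟨h1, h2⟩ := hh
    have hQ : Q = 0 := (map_eq_zero_iff _ inj).1 h2
    have hP : P = 0 := by
      rcases mul_eq_zero.1 h1 with h | h
      · exact absurd h hl
      · exact (map_eq_zero_iff _ inj).1 h
    have := h.1
    rw [hP, hQ] at this
    exact not_isCoprime_zero_zero this

lemma Rep.exists {A B : F} (S : (W K A B).Point) : ∃ P Q : F[X], Rep S P Q := by
  have inj := IsFractionRing.injective F[X] K
  have hl : algebraMap F[X] K (lam A B) ≠ 0 := (map_ne_zero_iff _ inj).2 (lam_ne A B)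
  cases S with
  | zero => exact ⟨1, 0, isCoprime_one_left, by simp [zc]⟩
  | some x y h =>
    obtain ⟨n, m, hco, hnm⟩ := IsFractionRing.exists_reduced_fraction (A := F[X])
      (x / algebraMap F[X] K (lam A B))
    have hm0 : algebraMap F[X] K m ≠ 0 := (map_ne_zero_iff _ inj).2 (nonZeroDivisors.ne_zero m.2)
    refine ⟨n, m, hco.isCoprime, ?_⟩
    rw [IsFractionRing.mk'_eq_div] at hnm
    simp only [zc, xc]
    field_simp at hnm
    rw [mul_one, hnm, mul_comm]

lemma Rep.unique {A B : F} {S : (W K A B).Point} {P Q P' Q' : F[X]} (h : Rep S P Q)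
    (h' : Rep S P' Q') : natDegree P = natDegree P' ∧ (degree Q < degree P → degree Q' < degree P')
      := by
  have inj := IsFractionRing.injective F[X] K
  have hl : algebraMap F[X] K (lam A B) ≠ 0 := (map_ne_zero_iff _ inj).2 (lam_ne A B)
  obtain ⟨u, hu, h1, h2⟩ := h.prop
  obtain ⟨v, hv, h3, h4⟩ := h'.prop
  have e : P * Q' = P' * Q := by
    apply inj
    rw [map_mul, map_mul]
    apply mul_left_cancel₀ hl
    rw [← mul_assoc, ← mul_assoc, h1, h2, h3, h4]; ring
  have a1 : Associated P P' := associated_of_dvd_dvd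
    (h.1.dvd_of_dvd_mul_right (Dvd.intro _ e)) (h'.1.dvd_of_dvd_mul_right (Dvd.intro _ e.symm))
  have a2 : Associated Q Q' := associated_of_dvd_dvd
    (h.1.symm.dvd_of_dvd_mul_left (e ▸ dvd_mul_left _ _))
    (h'.1.symm.dvd_of_dvd_mul_left (e.symm ▸ dvd_mul_left _ _))
  refine ⟨natDegree_eq_of_degree_eq (degree_eq_degree_of_associated a1), ?_⟩
  rw [degree_eq_degree_of_associated a1, degree_eq_degree_of_associated a2]
  exact id

lemma Rep.step {A B : F} (h2 : (2 : F) ≠ 0) (hB : B ≠ 0) (hAB : A ^ 2 - 4 * B ≠ 0)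
    (hT : (W K A B).Nonsingular (algebraMap F[X] K (lam A B * X)) (algebraMap F[X] K (lam A B ^ 2)))
    {S : (W K A B).Point} {P Q P1 Q1 P2 Q2 : F[X]} (h : Rep S P Q)
    (hd : degree Q < degree P) (hh1 : Rep (S + .some _ _ hT) P1 Q1)
    (hh2 : Rep (S - .some _ _ hT) P2 Q2) :
    degree Q1 < degree P1 ∧ degree Q2 < degree P2 ∧
      natDegree P1 + natDegree P2 = 2 * natDegree P + 2 := by
  have inj := IsFractionRing.injective F[X] K
  have hl : algebraMap F[X] K (lam A B) ≠ 0 := (map_ne_zero_iff _ inj).2 (lam_ne A B)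
  have h2K : (2 : K) ≠ 0 := by
    have : (2 : F[X]) ≠ 0 := by
      rw [show (2 : F[X]) = C 2 from (map_ofNat C 2).symm]
      exact C_ne_zero.2 h2
    have := (map_ne_zero_iff _ inj).2 this
    rwa [map_ofNat] at this
  have hv : algebraMap F[X] K (lam A B ^ 2) ≠ 0 := by rw [map_pow]; exact pow_ne_zero _ hl
  obtain ⟨c, hc, c1, c2, c3⟩ := addsub h2K hv hT S
  obtain ⟨w, hw, w1, w2⟩ := h.prop
  obtain ⟨u, hu, u1, u2⟩ := hh1.prop
  obtain ⟨v, hv, v1, v2⟩ := hh2.prop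
  obtain ⟨y, hy, y1, y2, y3⟩ := prim_unit (K := K)
    (κ := u * v * c * (algebraMap F[X] K (lam A B)) ^ 2 / w ^ 2) (div_ne_zero (mul_ne_zero (mul_ne_zero (mul_ne_zero hu hv) hc) (pow_ne_zero _ hl)) (pow_ne_zero _ hw))
    (prim_one hh1.1 hh2.1) (prim_two h2 hB hAB h.1)
    (by
      simp only [map_mul, map_sub, map_pow] at *
      generalize xc S = x at *
      generalize zc S = z at *
      have hx : x = algebraMap F[X] K (lam A B) * algebraMap F[X] K P / w := by
        rw [w1]; field_simp
      have hz : z = algebraMap F[X] K Q / w := by rw [w2]; field_simp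
      rw [u2, v2, mul_mul_mul_comm, c1, hx, hz]
      field_simp)
    (by
      simp only [map_mul, map_sub, map_pow] at *
      generalize xc S = x at *
      generalize zc S = z at *
      have hx : x = algebraMap F[X] K (lam A B) * algebraMap F[X] K P / w := by
        rw [w1]; field_simp
      have hz : z = algebraMap F[X] K Q / w := by rw [w2]; field_simp
      apply mul_left_cancel₀ (pow_ne_zero 2 hl)
      rw [show ∀ l a b : K, l ^ 2 * (a * b) = (l * a) * (l * b) by intros; ring, u1, v1,
        mul_mul_mul_comm, c2, hx, hz]
      field_simp)
    (by
      simp only [map_mul, map_sub, map_pow, map_add, map_ofNat] at *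
      generalize xc S = x at *
      generalize zc S = z at *
      have hx : x = algebraMap F[X] K (lam A B) * algebraMap F[X] K P / w := by
        rw [w1]; field_simp
      have hz : z = algebraMap F[X] K Q / w := by rw [w2]; field_simp
      apply mul_left_cancel₀ hl
      rw [mul_add, ← mul_assoc, ← mul_assoc, u1, v1, u2, v2]
      rw [show ∀ a b d e : K, u * a * (v * b) + v * d * (u * e) = u * v * (a * b + d * e) by
        intros; ring, c3, hx, hz]
      field_simp)
  exact deg_step hy hd y1 y2 y3

end rep
end TQ

namespace TQ
open Polynomial

section base
variable {F : Type*} [Field F] {K : Type*} [Field K] [DecidableEq K] [Algebra F[X] K]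
  [IsFractionRing F[X] K]

lemma nonsing {A B : F} (h2 : (2 : F) ≠ 0) {x y : F[X]} (hy : y ≠ 0)
    (h : y ^ 2 = x ^ 3 + C A * lam A B * x ^ 2 + C B * lam A B ^ 2 * x) :
    (W K A B).Nonsingular (algebraMap F[X] K x) (algebraMap F[X] K y) := by
  have inj := IsFractionRing.injective F[X] K
  rw [WeierstrassCurve.Affine.nonsingular_iff, WeierstrassCurve.Affine.equation_iff]
  constructor
  · have := congrArg (algebraMap F[X] K) h
    simpa using this
  · right
    intro h'
    have : algebraMap F[X] K (C 2 * y) = 0 := by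
      rw [map_mul, show (C (2 : F) : F[X]) = 2 from map_ofNat C 2, map_ofNat]
      simp only at h'
      linear_combination h'
    rw [map_eq_zero_iff _ inj] at this
    exact mul_ne_zero (C_ne_zero.2 h2) hy this

lemma nonsingT {A B : F} (h2 : (2 : F) ≠ 0) : (W K A B).Nonsingular
    (algebraMap F[X] K (lam A B * X)) (algebraMap F[X] K (lam A B ^ 2)) := by
  refine nonsing h2 (pow_ne_zero _ (lam_ne A B)) ?_
  have : lam A B = X ^ 3 + C A * X ^ 2 + C B * X := rfl
  linear_combination lam A B ^ 3 * this

lemma rep_base {A B : F} {hT : (W K A B).Nonsingular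
    (algebraMap F[X] K (lam A B * X)) (algebraMap F[X] K (lam A B ^ 2))} {p m : ℕ}
    {hS : (W K A B).Nonsingular
    (algebraMap F[X] K (lam A B * X ^ p)) (algebraMap F[X] K (lam A B ^ 2 * lam A B ^ m))}
    {ε : F} (hε : ε = 1 ∨ ε = -1) {R : (W K A B).Point}
    (hR1 : ε = 1 → R = .some _ _ hT) (hR2 : ε = -1 → R = -.some _ _ hT) {D1 D2 E : F[X]}
    (hD : X ^ p - X = lam A B * D1 * D2) (hD0 : (X ^ p - X : F[X]) ≠ 0)
    (hE : lam A B ^ m - C ε = D1 * E)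
    (hco : IsCoprime E (lam A B * D2)) :
    Rep (.some _ _ hS + R) (E ^ 2 - (C A + X ^ p + X) * (lam A B * D2 ^ 2)) (lam A B * D2 ^ 2) := by
  have inj := IsFractionRing.injective F[X] K
  have hl : algebraMap F[X] K (lam A B) ≠ 0 := (map_ne_zero_iff _ inj).2 (lam_ne A B)
  have hDK : algebraMap F[X] K X ^ p - algebraMap F[X] K X ≠ 0 := by
    have := (map_ne_zero_iff _ inj).2 hD0
    rwa [map_sub, map_pow] at this
  constructor
  · have c1 : IsCoprime (E ^ 2) (lam A B * D2 ^ 2) :=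
      ((IsCoprime.mul_right_iff.1 hco).1.mul_right (IsCoprime.pow_right
        (IsCoprime.mul_right_iff.1 hco).2)).pow_left
    rw [sub_eq_add_neg, ← neg_mul, mul_comm]
    exact c1.add_mul_left_left _
  · have hx : algebraMap F[X] K (lam A B * X ^ p) ≠ algebraMap F[X] K (lam A B * X) := by
      intro h
      have h := inj h
      exact hD0 (sub_eq_zero.2 (mul_left_cancel₀ (lam_ne A B) h))
    have key : zc (.some _ _ hS + R) = 1 ∧ xc (.some _ _ hS + R) =
        (algebraMap F[X] K (lam A B) * (algebraMap F[X] K (lam A B) ^ m - algebraMap F[X] K (C ε)) /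
          (algebraMap F[X] K X ^ p - algebraMap F[X] K X)) ^ 2 -
          algebraMap F[X] K (lam A B) * (algebraMap F[X] K (C A) + algebraMap F[X] K X ^ p +
            algebraMap F[X] K X) := by
      rcases hε with h | h
      · rw [hR1 h, WeierstrassCurve.Affine.Point.add_of_X_ne hx]
        refine ⟨rfl, ?_⟩
        simp only [xc, WeierstrassCurve.Affine.addX]
        rw [WeierstrassCurve.Affine.slope_of_X_ne hx, h]
        simp only [map_mul, map_pow, map_one]
        rw [← mul_sub]
        field_simp
        ring
      · rw [hR2 h, WeierstrassCurve.Affine.Point.neg_some,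
          WeierstrassCurve.Affine.Point.add_of_X_ne hx]
        refine ⟨rfl, ?_⟩
        simp only [xc, WeierstrassCurve.Affine.addX]
        rw [WeierstrassCurve.Affine.slope_of_X_ne hx, h]
        simp only [map_mul, map_pow, map_one, map_neg, WeierstrassCurve.Affine.negY]
        rw [← mul_sub]
        field_simp
        ring
    rw [key.1, key.2]
    have e1 := congrArg (algebraMap F[X] K) hD
    have e2 := congrArg (algebraMap F[X] K) hE
    simp only [map_mul, map_sub, map_pow, map_add] at e1 e2 hDK ⊢
    rw [e1] at hDK
    have d1 : algebraMap F[X] K D1 ≠ 0 := fun h => hDK (by rw [h]; ring)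
    have d2 : algebraMap F[X] K D2 ≠ 0 := fun h => hDK (by rw [h]; ring)
    rw [e1, e2]
    field_simp

end base

lemma int_seq {d : ℤ → ℕ} (hd : ∀ n, d (n + 1) + d (n - 1) = 2 * d n + 2) {p : ℕ} {t : ℤ}
    (h0 : d 0 = p) (h1 : (d 1 : ℤ) = p + 1 - t) (n : ℤ) : (d n : ℤ) = n ^ 2 - t * n + p := by
  have key : ∀ n : ℤ, (d n : ℤ) = n ^ 2 - t * n + p ∧
      (d (n + 1) : ℤ) = (n + 1) ^ 2 - t * (n + 1) + p := by
    intro n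
    induction n using Int.induction_on with
    | zero => exact ⟨by simp [h0], by simp only [zero_add, h1]; ring⟩
    | succ i ih =>
      refine ⟨ih.2, ?_⟩
      have := hd (i + 1)
      rw [add_sub_cancel_right] at this
      have : (d ((i : ℤ) + 1 + 1) : ℤ) + d i = 2 * d ((i : ℤ) + 1) + 2 := by exact_mod_cast this
      rw [ih.1, ih.2] at this
      linear_combination this
    | pred i ih =>
      have := hd (-i)
      have : (d (-(i : ℤ) + 1) : ℤ) + d (-(i : ℤ) - 1) = 2 * d (-(i : ℤ)) + 2 := by
        exact_mod_cast this
      rw [ih.1, ih.2] at this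
      refine ⟨by linear_combination this, ?_⟩
      rw [sub_add_cancel]; exact ih.1
  exact (key n).1

lemma int_bound {d : ℤ → ℕ} {p : ℕ} (hp : Odd p) {t : ℤ}
    (h : ∀ n, (d n : ℤ) = n ^ 2 - t * n + p) : t ^ 2 ≤ 4 * p := by
  rcases Int.even_or_odd' t with ⟨k, rfl | rfl⟩
  · have := h k
    nlinarith [Int.natCast_nonneg (d k)]
  · have := h k
    have h0 := Int.natCast_nonneg (d k)
    have h1 : k * (k + 1) ≤ p := by nlinarith
    have h2 : k * (k + 1) ≠ p := by
      intro h2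
      have h3 := Int.even_mul_succ_self k
      rw [h2] at h3
      have : Odd (p : ℤ) := by exact_mod_cast hp
      exact (Int.not_even_iff_odd.2 this) h3
    have h3 : k * (k + 1) + 1 ≤ p := lt_of_le_of_ne h1 h2
    nlinarith

end TQ

namespace TQ
open Polynomial

section fin
variable {p : ℕ} [Fact p.Prime]

def ff (a b r : ZMod p) : ZMod p := r * (r + a) * (r + b)

def cs (a b s : ZMod p) : Finset (ZMod p) := Finset.univ.filter (fun r => ff a b r ^ (p / 2) = s)

noncomputable def Dp (a b s : ZMod p) : (ZMod p)[X] := ∏ r ∈ cs a b s, (X - C r)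

lemma eval_lam (a b r : ZMod p) : eval r (lam (a + b) (a * b)) = ff a b r := by
  simp [lam, ff]; ring

lemma Dp_natDegree (a b s : ZMod p) : natDegree (Dp a b s) = (cs a b s).card := by
  unfold Dp; exact natDegree_finsetProd_X_sub_C_eq_card _ _

lemma Dp_ne (a b s : ZMod p) : Dp a b s ≠ 0 :=
  Finset.prod_ne_zero_iff.2 fun r _ => X_sub_C_ne_zero r

lemma lam_eq {a b : ZMod p} (hodd : p ≠ 2) (ha : a ≠ 0) (hb : b ≠ 0) (hab : a ≠ b) :
    lam (a + b) (a * b) = Dp a b 0 ∧ (cs a b 0).card = 3 := by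
  have hm : p / 2 ≠ 0 := by
    have := (Fact.out : p.Prime).two_le
    omega
  have hs : cs a b 0 = {0, -a, -b} := by
    ext r
    simp only [cs, Finset.mem_filter, Finset.mem_univ, true_and, Finset.mem_insert,
      Finset.mem_singleton, pow_eq_zero_iff hm, ff, mul_eq_zero, add_eq_zero_iff_eq_neg]
    tauto
  have h1 : (0 : ZMod p) ∉ ({-a, -b} : Finset (ZMod p)) := by
    simp [eq_comm, ha, hb]
  have h2 : (-a : ZMod p) ∉ ({-b} : Finset (ZMod p)) := by
    simp [hab]
  constructor
  · rw [Dp, hs, Finset.prod_insert h1, Finset.prod_insert h2, Finset.prod_singleton]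
    simp only [lam, map_add, map_mul, map_neg, map_zero]
    ring
  · rw [hs, Finset.card_insert_of_notMem h1, Finset.card_insert_of_notMem h2,
      Finset.card_singleton]

lemma trich (hodd : p ≠ 2) (x : ZMod p) : x ^ (p / 2) = 0 ∨ x ^ (p / 2) = 1 ∨ x ^ (p / 2) = -1 := by
  by_cases hx : x = 0
  · left
    have := (Fact.out : p.Prime).two_le
    rw [hx, zero_pow (by omega)]
  · exact Or.inr (ZMod.pow_div_two_eq_neg_one_or_one p hx)

lemma two_ne (hodd : p ≠ 2) : (2 : ZMod p) ≠ 0 := by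
  have : ((2 : ℕ) : ZMod p) ≠ 0 := by
    rw [Ne, ZMod.natCast_eq_zero_iff]
    intro h
    exact hodd ((Nat.prime_dvd_prime_iff_eq Fact.out Nat.prime_two).1 h)
  exact_mod_cast this

lemma cs_disj {a b s t : ZMod p} (h : s ≠ t) : Disjoint (cs a b s) (cs a b t) := by
  rw [Finset.disjoint_left]
  intro r h1 h2
  simp only [cs, Finset.mem_filter] at h1 h2
  exact h (h1.2.symm.trans h2.2)

lemma ne3 (hodd : p ≠ 2) : (0 : ZMod p) ≠ 1 ∧ (0 : ZMod p) ≠ -1 ∧ (1 : ZMod p) ≠ -1 := by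
  refine ⟨zero_ne_one, by simp, ?_⟩
  intro h
  apply two_ne hodd
  linear_combination h

lemma cs_union (hodd : p ≠ 2) (a b : ZMod p) :
    (Finset.univ : Finset (ZMod p)) = (cs a b 0 ∪ cs a b 1) ∪ cs a b (-1) := by
  ext r
  have := trich hodd (ff a b r)
  simp only [cs, Finset.mem_union, Finset.mem_filter, Finset.mem_univ, true_and, true_iff]
  tauto

lemma cs_disj2 (hodd : p ≠ 2) (a b : ZMod p) : Disjoint (cs a b 0 ∪ cs a b 1) (cs a b (-1)) := by
  rw [Finset.disjoint_union_left]
  exact ⟨cs_disj (ne3 hodd).2.1, cs_disj (ne3 hodd).2.2⟩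

lemma cs_card (hodd : p ≠ 2) {a b : ZMod p} (ha : a ≠ 0) (hb : b ≠ 0) (hab : a ≠ b) :
    3 + (cs a b 1).card + (cs a b (-1)).card = p := by
  have := congrArg Finset.card (cs_union hodd a b)
  rw [Finset.card_union_of_disjoint (cs_disj2 hodd a b),
    Finset.card_union_of_disjoint (cs_disj (ne3 hodd).1), (lam_eq hodd ha hb hab).2,
    Finset.card_univ, ZMod.card] at this
  exact this.symm

lemma XpX (hodd : p ≠ 2) {a b : ZMod p} (ha : a ≠ 0) (hb : b ≠ 0) (hab : a ≠ b) :
    (X ^ p - X : (ZMod p)[X]) = lam (a + b) (a * b) * Dp a b 1 * Dp a b (-1) := by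
  have hp := (Fact.out : p.Prime).one_lt
  have h1 : (X ^ p - X : (ZMod p)[X]) = ∏ r : ZMod p, (X - C r) := by
    have hr := FiniteField.roots_X_pow_card_sub_X (ZMod p)
    rw [ZMod.card] at hr
    have := prod_multiset_X_sub_C_of_monic_of_roots_card_eq
      (p := (X ^ p - X : (ZMod p)[X])) ?_ ?_
    · rw [← this, hr]; rfl
    · exact monic_X_pow_sub (by rw [degree_X]; exact_mod_cast hp)
    · rw [hr, FiniteField.X_pow_card_sub_X_natDegree_eq _ hp]
      simp [ZMod.card]
  rw [h1, (lam_eq hodd ha hb hab).1, cs_union hodd a b, Finset.prod_union (cs_disj2 hodd a b),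
    Finset.prod_union (cs_disj (ne3 hodd).1)]
  rfl

lemma E_exists (hodd : p ≠ 2) {a b : ZMod p} (ha : a ≠ 0) (hb : b ≠ 0) (hab : a ≠ b)
    {ε : ZMod p} (hε : ε = 1 ∨ ε = -1) : ∃ E : (ZMod p)[X],
      lam (a + b) (a * b) ^ (p / 2) - C ε = Dp a b ε * E ∧
      IsCoprime E (lam (a + b) (a * b) * Dp a b (-ε)) := by
  have hev : ∀ r, eval r (lam (a + b) (a * b) ^ (p / 2) - C ε) = ff a b r ^ (p / 2) - ε := by
    intro r; simp [eval_lam]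
  have hd : Dp a b ε ∣ lam (a + b) (a * b) ^ (p / 2) - C ε := by
    refine Finset.prod_dvd_of_coprime ?_ ?_
    · intro i _ j _ hij
      exact pairwise_coprime_X_sub_C Function.injective_id hij
    · intro r hr
      rw [dvd_iff_isRoot, IsRoot, hev]
      simp only [cs, Finset.mem_filter] at hr
      rw [hr.2, sub_self]
  obtain ⟨E, hE⟩ := hd
  refine ⟨E, hE, ?_⟩
  have h3 := ne3 (p := p) hodd
  have h0ε : (0 : ZMod p) ≠ ε := by rcases hε with rfl | rfl; exacts [h3.1, h3.2.1]
  have hnε : -ε ≠ ε := by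
    rcases hε with rfl | rfl
    · exact h3.2.2.symm
    · rw [neg_neg]; exact h3.2.2
  have key : ∀ s, s ≠ ε → IsCoprime E (Dp a b s) := by
    intro s hs
    refine IsCoprime.prod_right ?_
    intro r hr
    simp only [cs, Finset.mem_filter] at hr
    apply IsCoprime.symm
    rw [(irreducible_X_sub_C r).coprime_iff_not_dvd, dvd_iff_isRoot, IsRoot]
    intro h
    have h4 := hev r
    rw [hE, eval_mul, h, mul_zero, hr.2] at h4
    exact hs (sub_eq_zero.1 h4.symm)
  rw [(lam_eq hodd ha hb hab).1]
  exact (key 0 h0ε).mul_right (key _ hnε)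

open Classical in
theorem hasse (hodd : p ≠ 2) {a b : ZMod p} (ha : a ≠ 0) (hb : b ≠ 0) (hab : a ≠ b) :
    (((cs a b 1).card : ℤ) - (cs a b (-1)).card) ^ 2 ≤ 4 * p := by
  have hp := (Fact.out : p.Prime)
  have h2 := two_ne (p := p) hodd
  have hpo : Odd p := hp.odd_of_ne_two hodd
  have hpm : p = 2 * (p / 2) + 1 := by
    obtain ⟨k, hk⟩ := hpo; omega
  obtain ⟨A, hA⟩ : ∃ A, A = a + b := ⟨_, rfl⟩
  obtain ⟨B, hB⟩ : ∃ B, B = a * b := ⟨_, rfl⟩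
  have hB0 : B ≠ 0 := by rw [hB]; exact mul_ne_zero ha hb
  have hAB : A ^ 2 - 4 * B ≠ 0 := by
    rw [hA, hB, show (a + b) ^ 2 - 4 * (a * b) = (a - b) ^ 2 by ring]
    exact pow_ne_zero _ (sub_ne_zero.2 hab)
  have hll : lam A B = X ^ 3 + C A * X ^ 2 + C B * X := rfl
  have hfrob : lam A B ^ p = (X ^ p) ^ 3 + C A * (X ^ p) ^ 2 + C B * X ^ p := by
    rw [← ZMod.expand_card, hll]
    simp
  let K := FractionRing (ZMod p)[X]
  have hT := nonsingT (K := K) (A := A) (B := B) h2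
  have hS : (W K A B).Nonsingular (algebraMap _ K (lam A B * X ^ p))
      (algebraMap _ K (lam A B ^ 2 * lam A B ^ (p / 2))) := by
    refine nonsing h2 (mul_ne_zero (pow_ne_zero _ (lam_ne A B)) (pow_ne_zero _ (lam_ne A B))) ?_
    have : (lam A B ^ 2 * lam A B ^ (p / 2)) ^ 2 = lam A B ^ 3 * lam A B ^ p := by
      have e : lam A B ^ p = lam A B ^ (2 * (p / 2) + 1) := congrArg (fun k => lam A B ^ k) hpm
      rw [e]; ring
    rw [this, hfrob]; ring
  let T : (W K A B).Point := .some _ _ hT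
  let S : (W K A B).Point := .some _ _ hS
  let φ : ℤ → (W K A B).Point := fun n => S + n • T
  choose P Q hPQ using fun n => Rep.exists (φ n)
  have hφ1 : ∀ n, φ (n + 1) = φ n + T := by
    intro n; simp only [φ, add_zsmul, one_zsmul, add_assoc]
  have hφ2 : ∀ n, φ (n - 1) = φ n - T := by
    intro n
    have := hφ1 (n - 1)
    rw [sub_add_cancel] at this
    rw [this, add_sub_cancel_right]
  have hstep : ∀ n, degree (Q n) < degree (P n) → degree (Q (n + 1)) < degree (P (n + 1)) ∧
      degree (Q (n - 1)) < degree (P (n - 1)) ∧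
      natDegree (P (n + 1)) + natDegree (P (n - 1)) = 2 * natDegree (P n) + 2 := by
    intro n hn
    refine Rep.step h2 hB0 hAB hT (hPQ n) hn ?_ ?_
    · have := hPQ (n + 1); rw [hφ1] at this; exact this
    · have := hPQ (n - 1); rw [hφ2] at this; exact this
  have hr0 : Rep (φ 0) (X ^ p) 1 := by
    have : φ 0 = S := by simp [φ]
    rw [this]
    refine ⟨isCoprime_one_right, ?_⟩
    simp only [S, zc, xc, map_mul, map_one]
    ring
  have h00 := hr0.unique (hPQ 0)
  have hd0 : degree (Q 0) < degree (P 0) := h00.2 (by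
    rw [degree_one, degree_X_pow]; exact_mod_cast hp.pos)
  have hdall : ∀ n, degree (Q n) < degree (P n) := by
    intro n
    induction n using Int.induction_on with
    | zero => exact hd0
    | succ i ih => exact (hstep _ ih).1
    | pred i ih => exact (hstep _ ih).2.1
  have hcard := cs_card hodd ha hb hab
  have hX0 : (X ^ p - X : (ZMod p)[X]) ≠ 0 := FiniteField.X_pow_card_sub_X_ne_zero _ hp.one_lt
  have hXX := XpX hodd ha hb hab
  have hX1 : (X ^ p - X : (ZMod p)[X]) = lam A B * Dp a b 1 * Dp a b (-1) := by
    rw [hA, hB]; exact hXX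
  have hX2 : (X ^ p - X : (ZMod p)[X]) = lam A B * Dp a b (-1) * Dp a b (- -1) := by
    rw [neg_neg, hX1]; ring
  have hdeg : ∀ s : ZMod p, natDegree (lam A B * Dp a b s ^ 2) = 3 + 2 * (cs a b s).card := by
    intro s
    rw [natDegree_mul (lam_ne A B) (pow_ne_zero _ (Dp_ne a b s)), lam_natDegree, natDegree_pow,
      Dp_natDegree]
  have hge : ∀ (n : ℤ) (s : ZMod p) (P' : (ZMod p)[X]), Rep (φ n) P' (lam A B * Dp a b s ^ 2) →
      4 + 2 * (cs a b s).card ≤ natDegree (P n) := by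
    intro n s P' h
    have h1 := (hPQ n).unique h
    have h2 := h1.2 (hdall n)
    have h3 : natDegree (lam A B * Dp a b s ^ 2) < natDegree P' :=
      natDegree_lt_natDegree (mul_ne_zero (lam_ne A B) (pow_ne_zero _ (Dp_ne a b s))) h2
    rw [hdeg] at h3
    omega
  have hd1 : 4 + 2 * (cs a b (-1)).card ≤ natDegree (P 1) := by
    obtain ⟨E, hE, hco⟩ := E_exists hodd ha hb hab (Or.inl rfl)
    rw [← hA, ← hB] at hE hco
    have := rep_base (hT := hT) (hS := hS) (R := T) (Or.inl rfl) (fun _ => rfl)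
      (fun h => absurd h (ne3 hodd).2.2) hX1 hX0 hE hco
    have e : φ 1 = S + T := by simp [φ]
    exact hge 1 (-1) _ (e ▸ this)
  have hdm1 : 4 + 2 * (cs a b 1).card ≤ natDegree (P (-1)) := by
    obtain ⟨E, hE, hco⟩ := E_exists hodd ha hb hab (Or.inr rfl)
    rw [← hA, ← hB] at hE hco
    have := rep_base (hT := hT) (hS := hS) (R := -T) (Or.inr rfl)
      (fun h => absurd h.symm (ne3 hodd).2.2) (fun _ => rfl) hX2 hX0 hE hco
    rw [neg_neg] at this
    have e : φ (-1) = S + -T := by simp [φ]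
    exact hge (-1) 1 _ (e ▸ this)
  have hs0 := (hstep 0 hd0).2.2
  rw [← h00.1, natDegree_X_pow] at hs0
  simp only [zero_add, zero_sub] at hs0
  have hn0 : natDegree (P 0) = p := by rw [← h00.1, natDegree_X_pow]
  refine int_bound hpo (d := fun n => natDegree (P n)) ?_
  refine int_seq (fun n => (hstep n (hdall n)).2.2) hn0 ?_
  have : natDegree (P 1) = 4 + 2 * (cs a b (-1)).card := by omega
  rw [this]
  push_cast
  omega

end fin
end TQ

namespace TQ

section count
variable {p : ℕ} [Fact p.Prime]

lemma rc (hodd : p ≠ 2) : ringChar (ZMod p) ≠ 2 := by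
  rw [ZMod.ringChar_zmod_n]; exact hodd

lemma sqc (hodd : p ≠ 2) (u : ZMod p) :
    (∑ y : ZMod p, if u = y ^ 2 then (1 : ℤ) else 0) = quadraticChar (ZMod p) u + 1 := by
  rw [← quadraticChar_card_sqrts (rc hodd) u, ← Finset.sum_filter, Finset.sum_const, nsmul_eq_mul,
    mul_one]
  congr 2
  ext y
  simp [eq_comm]

lemma conic (hodd : p ≠ 2) {a : ZMod p} (ha : a ≠ 0) :
    ∑ x : ZMod p, quadraticChar (ZMod p) (x ^ 2 + a) = -1 := by
  have h2 := two_ne (p := p) hodd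
  have h1 : ∑ x : ZMod p, (quadraticChar (ZMod p) (x ^ 2 + a) + 1) = (p : ℤ) - 1 := by
    simp_rw [← sqc hodd]
    rw [← Fintype.sum_prod_type' (f := fun x y : ZMod p => if x ^ 2 + a = y ^ 2 then (1 : ℤ) else 0),
      ← Finset.sum_filter, Finset.sum_const, nsmul_eq_mul, mul_one]
    have : (Finset.univ.filter (fun x : ZMod p × ZMod p => x.1 ^ 2 + a = x.2 ^ 2)).card =
        ((Finset.univ : Finset (ZMod p)).erase 0).card := by
      refine Finset.card_nbij' (fun x => x.2 - x.1) (fun u => ((a / u - u) / 2, (a / u + u) / 2))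
        ?_ ?_ ?_ ?_
      · rintro ⟨x, y⟩ h
        simp only [Finset.coe_filter, Finset.mem_univ, true_and, Set.mem_setOf_eq] at h
        simp only [Finset.coe_erase, Finset.coe_univ, Set.mem_diff, Set.mem_univ, true_and,
          Set.mem_singleton_iff]
        intro h'
        apply ha
        linear_combination h + (x + y) * h'
      · intro u hu
        have hu : u ≠ 0 := by simpa using hu
        simp only [Finset.coe_filter, Finset.mem_univ, true_and, Set.mem_setOf_eq]
        field_simp
        ring
      · rintro ⟨x, y⟩ h
        simp only [Finset.coe_filter, Finset.mem_univ, true_and, Set.mem_setOf_eq] at h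
        have hd : y - x ≠ 0 := by
          intro h'
          apply ha
          linear_combination h + (x + y) * h'
        have : a / (y - x) = y + x := by
          field_simp
          linear_combination h
        simp only [this, Prod.mk.injEq]
        constructor <;> field_simp <;> ring
      · intro u hu
        have hu : u ≠ 0 := by simpa using hu
        simp only
        field_simp
        ring
    rw [this, Finset.card_erase_of_mem (Finset.mem_univ _), Finset.card_univ, ZMod.card,
      Nat.cast_sub (Fact.out : p.Prime).one_lt.le, Nat.cast_one]
  rw [Finset.sum_add_distrib] at h1
  simp only [Finset.sum_const, Finset.card_univ, ZMod.card, nsmul_eq_mul, mul_one] at h1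
  linarith

lemma conic2 (hodd : p ≠ 2) {a b : ZMod p} (hab : a ≠ b) :
    ∑ x : ZMod p, quadraticChar (ZMod p) ((x + a) * (x + b)) = -1 := by
  have h2 := two_ne (p := p) hodd
  have hne : -((a - b) / 2) ^ 2 ≠ 0 :=
    neg_ne_zero.2 (pow_ne_zero _ (div_ne_zero (sub_ne_zero.2 hab) h2))
  rw [← conic hodd hne]
  refine Fintype.sum_equiv (Equiv.addRight ((a + b) / 2)) _ _ ?_
  intro x
  congr 1
  simp only [Equiv.coe_addRight]
  field_simp
  ring

lemma sum_sq (hodd : p ≠ 2) (g : ZMod p → ℤ) :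
    ∑ x : ZMod p, g (x ^ 2) = ∑ u, (quadraticChar (ZMod p) u + 1) * g u := by
  simp_rw [← sqc hodd, Finset.sum_mul]
  rw [Finset.sum_comm]
  refine Finset.sum_congr rfl fun x _ => ?_
  simp

lemma sum_ff (hodd : p ≠ 2) (a b : ZMod p) :
    ∑ u, quadraticChar (ZMod p) (ff a b u) = ((cs a b 1).card : ℤ) - (cs a b (-1)).card := by
  have h3 := ne3 (p := p) hodd
  have hm : p / 2 ≠ 0 := by
    have := (Fact.out : p.Prime).two_le
    omega
  simp only [cs, Finset.card_filter]
  push_cast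
  rw [← Finset.sum_sub_distrib]
  refine Finset.sum_congr rfl fun u _ => ?_
  generalize ff a b u = x
  by_cases hx : x = 0
  · rw [hx, zero_pow hm, if_neg h3.1, if_neg h3.2.1]; simp
  · rw [quadraticChar_eq_pow_of_char_ne_two (rc hodd) hx, ZMod.card]
    rcases ZMod.pow_div_two_eq_neg_one_or_one p hx with h | h
    · simp [h, h3.2.2]
    · simp [h, h3.2.2.symm]

lemma main_count (hodd : p ≠ 2) {a b : ZMod p} (ha : a ≠ 0) (hb : b ≠ 0) (hab : a ≠ b) :
    (Nat.card {t : ZMod p × ZMod p × ZMod p //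
        t.1 ^ 2 + a = t.2.1 ^ 2 ∧ t.1 ^ 2 + b = t.2.2 ^ 2} : ℤ) =
      (p : ℤ) - 3 + (((cs a b 1).card : ℤ) - (cs a b (-1)).card) := by
  rw [← sum_ff hodd, Nat.card_eq_fintype_card, Fintype.card_subtype, Finset.card_filter]
  push_cast
  have e : ∀ x y z : ZMod p, (if x ^ 2 + a = y ^ 2 ∧ x ^ 2 + b = z ^ 2 then (1 : ℤ) else 0) =
      (if x ^ 2 + a = y ^ 2 then (1 : ℤ) else 0) * (if x ^ 2 + b = z ^ 2 then (1 : ℤ) else 0) := by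
    intro x y z
    split_ifs <;> simp_all
  rw [Fintype.sum_prod_type]
  simp_rw [Fintype.sum_prod_type, e, ← Finset.mul_sum, ← Finset.sum_mul, sqc hodd]
  have h1 := conic hodd ha
  have h2 := conic hodd hb
  have h3 := conic2 hodd hab
  have h4 := sum_sq hodd (fun u => quadraticChar (ZMod p) ((u + a) * (u + b)))
  have h5 : ∑ u, (quadraticChar (ZMod p) u + 1) * quadraticChar (ZMod p) ((u + a) * (u + b)) =
      ∑ u, quadraticChar (ZMod p) (ff a b u) +
        ∑ u, quadraticChar (ZMod p) ((u + a) * (u + b)) := by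
    rw [← Finset.sum_add_distrib]
    refine Finset.sum_congr rfl fun u _ => ?_
    rw [ff, mul_assoc, map_mul _ u]; ring
  have h6 : ∑ x : ZMod p, (quadraticChar (ZMod p) (x ^ 2 + a) + 1) *
      (quadraticChar (ZMod p) (x ^ 2 + b) + 1) =
      ∑ x : ZMod p, quadraticChar (ZMod p) ((x ^ 2 + a) * (x ^ 2 + b)) +
      ∑ x : ZMod p, quadraticChar (ZMod p) (x ^ 2 + a) +
      ∑ x : ZMod p, quadraticChar (ZMod p) (x ^ 2 + b) + ∑ x : ZMod p, 1 := by
    rw [← Finset.sum_add_distrib, ← Finset.sum_add_distrib, ← Finset.sum_add_distrib]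
    refine Finset.sum_congr rfl fun u _ => ?_
    rw [map_mul]; ring
  rw [h6, h4, h5, h1, h2, h3]
  simp only [Finset.sum_const, Finset.card_univ, ZMod.card, nsmul_eq_mul]
  ring

end count
end TQ

theorem two_quadratics_count (p : ℕ) (hp : p.Prime) (hodd : p ≠ 2) (a b : ZMod p)
    (ha : a ≠ 0) (hb : b ≠ 0) (hab : a ≠ b) :
    |(Nat.card {t : ZMod p × ZMod p × ZMod p //
        t.1 ^ 2 + a = t.2.1 ^ 2 ∧ t.1 ^ 2 + b = t.2.2 ^ 2} : ℝ) - ((p : ℝ) - 3)| ≤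
      2 * Real.sqrt p := by
  haveI : Fact p.Prime := ⟨hp⟩
  have h1 := TQ.main_count hodd ha hb hab
  have h2 := TQ.hasse hodd ha hb hab
  generalize ((TQ.cs a b 1).card : ℤ) - (TQ.cs a b (-1)).card = t at h1 h2
  have h1' : (Nat.card {t : ZMod p × ZMod p × ZMod p //
        t.1 ^ 2 + a = t.2.1 ^ 2 ∧ t.1 ^ 2 + b = t.2.2 ^ 2} : ℝ) = (p : ℝ) - 3 + t := by
    exact_mod_cast h1
  have h2' : (t : ℝ) ^ 2 ≤ 4 * p := by exact_mod_cast h2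
  rw [h1', add_sub_cancel_left]
  refine abs_le_of_sq_le_sq ?_ (by positivity)
  rw [mul_pow, Real.sq_sqrt (by positivity)]
  linarith
end
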